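/- For every integer d ≥ 1 there exist a constant c₉ = c₉(d) < ∞ and a translation-equivariant matching rule Φ such that for all real r ≥ 2, ℙ(Z_Φ > r) ≤ c₉ r^{−β'} (log r)², where β' = β'(d) = d/(d+2). -/

import Mathlib

open MeasureTheory ENNReal

noncomputable section

/-- Sites: the lattice `ℤ^d`. -/
abbrev Site (d : ℕ) := Fin d → ℤ

/-- Configurations: elements of `{0,1}^{ℤ^d}`, encoded with `Bool`. -/
abbrev Config (d : ℕ) := Site d → Bool

/-- The translation `θ^z` acting on configurations: `(θ^z γ)(x) = γ(x - z)`. -/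
def shiftCfg {d : ℕ} (z : Site d) (γ : Config d) : Config d := fun x => γ (x - z)

/-- `φ` is a matching on `γ`: an involutive bijection matching ones to zeros. -/
def IsMatching {d : ℕ} (γ : Config d) (φ : Site d → Site d) : Prop :=
  Function.Bijective φ ∧ (∀ x, φ (φ x) = x) ∧ ∀ x, γ (φ x) = !(γ x)

/-- `Φ` is a matching rule with respect to the measure `P`. -/
def IsMatchingRule {d : ℕ} (P : Measure (Config d)) (Φ : Config d → Site d → Site d) : Prop :=
  (∀ x : Site d, Measurable fun γ => Φ γ x) ∧ ∀ᵐ γ ∂P, IsMatching γ (Φ γ)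

/-- `Φ` is translation-equivariant with respect to `P`. -/
def IsEquivariant {d : ℕ} (P : Measure (Config d)) (Φ : Config d → Site d → Site d) : Prop :=
  ∀ z x : Site d, ∀ᵐ γ ∂P, Φ (shiftCfg z γ) (x + z) = Φ γ x + z

/-- `P` is the product measure with i.i.d. Bernoulli(1/2) coordinates, characterized by
its values on cylinder events. -/
def IsBernoulliHalfProduct {d : ℕ} (P : Measure (Config d)) : Prop :=
  IsProbabilityMeasure P ∧
    ∀ (s : Finset (Site d)) (f : Site d → Bool),
      P {γ | ∀ x ∈ s, γ x = f x} = (1 / 2 : ℝ≥0∞) ^ s.card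

/-- `Z_Φ(γ) = ‖Φ(γ, 0)‖`, the `ℓ^∞` distance from the origin to its partner. -/
def ZΦ {d : ℕ} (Φ : Config d → Site d → Site d) (γ : Config d) : ℝ := ‖Φ γ 0‖

/-- Embedding of the lattice in `ℝ^d`. -/
def toR {d : ℕ} (x : Site d) : Fin d → ℝ := fun i => (x i : ℝ)

/-- The first standard basis vector `e₁`. -/
def e1 (d : ℕ) : Site d := fun i => if (i : ℕ) = 0 then 1 else 0

/-- `x` is a `k`-seed for `γ`. -/
def IsSeed {d : ℕ} (γ : Config d) (k : ℕ) (x : Site d) : Prop :=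
  γ x = true ∧ ∀ n : ℕ, 1 ≤ n → n ≤ k - 1 → γ (x + (n : ℤ) • e1 d) = false

/-- `r_k = (2^k k²)^{1/d} + 1/2`. -/
def rr (d k : ℕ) : ℝ := ((2 : ℝ) ^ k * (k : ℝ) ^ 2) ^ ((d : ℝ)⁻¹) + 1 / 2

/-- The shift `s_k = ⌊100 r_k⌋ e₁`. -/
def ss (d k : ℕ) : Site d := ⌊(100 : ℝ) * rr d k⌋ • e1 d

/-- `W_k(γ)`: the union of all `k`-cutters. -/
def cutters {d : ℕ} (γ : Config d) (k : ℕ) : Set (Fin d → ℝ) :=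
  ⋃ x ∈ {x : Site d | IsSeed γ k (x - ss d k)}, {y : Fin d → ℝ | ‖y - toR x‖ = rr d k}

/-- The `k`-blob containing the point `p ∈ ℝ^d`: the connected component of `p` in the
complement of all `j`-cutters with `j > k`. -/
def blob {d : ℕ} (γ : Config d) (k : ℕ) (p : Fin d → ℝ) : Set (Fin d → ℝ) :=
  connectedComponentIn (⋃ j ∈ {j : ℕ | k < j}, cutters γ j)ᶜ p

/-- The `k`-clump of a site `x`: the lattice points of the `k`-blob containing `x`. -/
def clump {d : ℕ} (γ : Config d) (k : ℕ) (x : Site d) : Set (Site d) :=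
  {y : Site d | toR y ∈ blob γ k (toR x)}

/-- The event `E_k`: the cube `S(-s_k, r_k - 1)` contains a `k`-seed. -/
def Ek (d k : ℕ) : Set (Config d) :=
  {γ | ∃ y : Site d, IsSeed γ k y ∧ ‖toR y + toR (ss d k)‖ ≤ rr d k - 1}

/-- A `k`-seed lying in the annulus `S(-s_k, r_k + s) \ S(-s_k, r_k - s)`. -/
def SeedInAnnulus {d : ℕ} (γ : Config d) (k : ℕ) (s : ℝ) (y : Site d) : Prop :=
  IsSeed γ k y ∧ ‖toR y + toR (ss d k)‖ ≤ rr d k + s ∧ rr d k - s < ‖toR y + toR (ss d k)‖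

/-- The event `U_k(s)`: `S(-s_k, r_k + s) \ S(-s_k, r_k - s)` contains a `k`-seed. -/
def Uk (d : ℕ) (k : ℕ) (s : ℝ) : Set (Config d) :=
  {γ | ∃ y : Site d, SeedInAnnulus γ k s y}

/-- The event `C_k(s) = ∪_{j ≥ k} U_j(s)`. -/
def Ck (d : ℕ) (k : ℕ) (s : ℝ) : Set (Config d) :=
  {γ | ∃ j : ℕ, k ≤ j ∧ γ ∈ Uk d j s}

/-- `±1`-valued spin `2γ(x) - 1`. -/
def pm1 {d : ℕ} (γ : Config d) (y : Site d) : ℤ := if γ y then 1 else -1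

/-- `Φ` matches maximally within clumps: a.s. every clump is finite and the number of
sites of each `k`-clump `L` matched outside `L` equals `|Σ_{x ∈ L} (2γ(x) - 1)|`. -/
def MatchesMaximally {d : ℕ} (P : Measure (Config d))
    (Φ : Config d → Site d → Site d) : Prop :=
  ∀ᵐ γ ∂P, ∀ k : ℕ, 1 ≤ k → ∀ x : Site d,
    (clump γ k x).Finite ∧
      (({y ∈ clump γ k x | Φ γ y ∉ clump γ k x}.ncard : ℤ)
        = |∑ᶠ y ∈ clump γ k x, pm1 γ y|)


section RankMatching

variable {d : ℕ}

instance lexDec (a x : Site d) : Decidable (toLex a < toLex x) := Classical.propDecidable _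

/-- Rank of `x` relative to the finite set `A`, in the lexicographic order. -/
def rk (A : Finset (Site d)) (x : Site d) : ℕ := (A.filter (fun a => toLex a < toLex x)).card

lemma rk_lt {A : Finset (Site d)} {x : Site d} (hx : x ∈ A) : rk A x < A.card := by
  apply Finset.card_lt_card
  refine ⟨Finset.filter_subset _ _, fun h => ?_⟩
  have := (Finset.mem_filter.1 (h hx)).2
  exact lt_irrefl _ this

lemma rk_strict {A : Finset (Site d)} {x y : Site d} (hx : x ∈ A) (h : toLex x < toLex y) :
    rk A x < rk A y := by
  apply Finset.card_lt_card
  refine ⟨fun a ha => ?_, fun h' => ?_⟩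
  · rw [Finset.mem_filter] at ha ⊢
    exact ⟨ha.1, ha.2.trans h⟩
  · have := (Finset.mem_filter.1 (h' (Finset.mem_filter.2 ⟨hx, h⟩))).2
    exact lt_irrefl _ this

lemma rk_inj {A : Finset (Site d)} {x y : Site d} (hx : x ∈ A) (hy : y ∈ A)
    (h : rk A x = rk A y) : x = y := by
  rcases lt_trichotomy (toLex x) (toLex y) with h1 | h1 | h1
  · have := rk_strict hx h1; omega
  · exact toLex.injective h1
  · have := rk_strict hy h1; omega

lemma rk_image (A : Finset (Site d)) : A.image (rk A) = Finset.range A.card := by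
  apply Finset.eq_of_subset_of_card_le
  · intro n hn
    obtain ⟨x, hx, rfl⟩ := Finset.mem_image.1 hn
    exact Finset.mem_range.2 (rk_lt hx)
  · rw [Finset.card_range, Finset.card_image_of_injOn]
    intro x hx y hy h
    exact rk_inj hx hy h

lemma rk_surj (A : Finset (Site d)) {n : ℕ} (hn : n < A.card) : ∃ x ∈ A, rk A x = n := by
  have : n ∈ A.image (rk A) := by rw [rk_image]; exact Finset.mem_range.2 hn
  simpa using this

lemma rk_count (A : Finset (Site d)) (b : ℕ) :
    (A.filter (fun x => b ≤ rk A x)).card = A.card - b := by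
  have h1 : (A.filter (fun x => b ≤ rk A x)).image (rk A)
      = (Finset.range A.card).filter (fun n => b ≤ n) := by
    rw [← rk_image, Finset.filter_image]
  have h2 : (A.filter (fun x => b ≤ rk A x)).card
      = ((A.filter (fun x => b ≤ rk A x)).image (rk A)).card := by
    rw [Finset.card_image_of_injOn]
    intro x hx y hy h
    exact rk_inj (Finset.mem_filter.1 hx).1 (Finset.mem_filter.1 hy).1 h
  rw [h2, h1]
  have : (Finset.range A.card).filter (fun n => b ≤ n) = Finset.Ico b A.card := by
    ext n; simp; omega
  rw [this, Nat.card_Ico]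

/-- `x` and `y` have equal rank, one in `A`, the other in `B`. -/
def PR (A B : Finset (Site d)) (x y : Site d) : Prop :=
  (x ∈ A ∧ y ∈ B ∧ rk A x = rk B y) ∨ (x ∈ B ∧ y ∈ A ∧ rk B x = rk A y)

lemma PR_symm {A B : Finset (Site d)} {x y : Site d} (h : PR A B x y) : PR A B y x := by
  rcases h with ⟨a, b, c⟩ | ⟨a, b, c⟩
  · exact Or.inr ⟨b, a, c.symm⟩
  · exact Or.inl ⟨b, a, c.symm⟩

lemma PR_unique {A B : Finset (Site d)} (hAB : Disjoint A B) {x y z : Site d}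
    (h : PR A B x y) (h' : PR A B x z) : y = z := by
  rcases h with ⟨a, b, c⟩ | ⟨a, b, c⟩ <;> rcases h' with ⟨a', b', c'⟩ | ⟨a', b', c'⟩
  · exact rk_inj b b' (c.symm.trans c')
  · exact absurd a' (Finset.disjoint_left.1 hAB a)
  · exact absurd a (Finset.disjoint_left.1 hAB a')
  · exact rk_inj b b' (c.symm.trans c')

lemma PR_ne {A B : Finset (Site d)} (hAB : Disjoint A B) {x y : Site d}
    (h : PR A B x y) : y ≠ x := by
  rintro rfl
  rcases h with ⟨a, b, c⟩ | ⟨a, b, c⟩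
  · exact Finset.disjoint_left.1 hAB a b
  · exact Finset.disjoint_left.1 hAB b a

open Classical in
/-- Partner of `x` when `A` and `B` are matched by rank; `x` itself if unmatched. -/
def GG (A B : Finset (Site d)) (x : Site d) : Site d :=
  if h : ∃ y, PR A B x y then h.choose else x

lemma GG_cases (A B : Finset (Site d)) (x : Site d) :
    GG A B x = x ∨ PR A B x (GG A B x) := by
  unfold GG
  split_ifs with h
  · exact Or.inr h.choose_spec
  · exact Or.inl rfl

lemma GG_eq {A B : Finset (Site d)} (hAB : Disjoint A B) {x y : Site d}
    (h : PR A B x y) : GG A B x = y := by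
  have h' : ∃ y, PR A B x y := ⟨y, h⟩
  unfold GG
  rw [dif_pos h']
  exact PR_unique hAB h'.choose_spec h

lemma GG_invol {A B : Finset (Site d)} (hAB : Disjoint A B) (x : Site d) :
    GG A B (GG A B x) = x := by
  rcases GG_cases A B x with h | h
  · rw [h, h]
  · exact GG_eq hAB (PR_symm h)

lemma GG_count {A B : Finset (Site d)} (hAB : Disjoint A B) :
    ((A ∪ B).filter (fun x => GG A B x = x)).card ≤ (A.card - B.card) + (B.card - A.card) := by
  rw [← rk_count A B.card, ← rk_count B A.card]
  refine le_trans (Finset.card_le_card ?_) (Finset.card_union_le _ _)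
  intro x hx
  rw [Finset.mem_filter, Finset.mem_union] at hx
  obtain ⟨hx, hG⟩ := hx
  rw [Finset.mem_union, Finset.mem_filter, Finset.mem_filter]
  rcases hx with hx | hx
  · left
    refine ⟨hx, ?_⟩
    by_contra hlt
    obtain ⟨y, hy, hr⟩ := rk_surj B (not_le.1 hlt)
    have h : PR A B x y := Or.inl ⟨hx, hy, hr.symm⟩
    exact PR_ne hAB h ((GG_eq hAB h).symm.trans hG)
  · right
    refine ⟨hx, ?_⟩
    by_contra hlt
    obtain ⟨y, hy, hr⟩ := rk_surj A (not_le.1 hlt)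
    have h : PR A B x y := Or.inr ⟨hx, hy, hr.symm⟩
    exact PR_ne hAB h ((GG_eq hAB h).symm.trans hG)

lemma rk_shift (A : Finset (Site d)) (x z : Site d) :
    rk (A.image (· + z)) (x + z) = rk A x := by
  unfold rk
  rw [Finset.filter_image, Finset.card_image_of_injective _ (add_left_injective z)]
  congr 1
  apply Finset.filter_congr
  intro a _
  rw [toLex_add, toLex_add]
  exact add_lt_add_iff_right _

lemma mem_image_add (A : Finset (Site d)) (x z : Site d) :
    x + z ∈ A.image (· + z) ↔ x ∈ A := by
  simp

lemma PR_shift (A B : Finset (Site d)) (x y z : Site d) :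
    PR (A.image (· + z)) (B.image (· + z)) (x + z) (y + z) ↔ PR A B x y := by
  unfold PR
  simp only [mem_image_add, rk_shift]

lemma GG_shift {A B : Finset (Site d)} (hAB : Disjoint A B) (x z : Site d) :
    GG (A.image (· + z)) (B.image (· + z)) (x + z) = GG A B x + z := by
  have hd : Disjoint (A.image (· + z)) (B.image (· + z)) :=
    (Finset.disjoint_image (add_left_injective z)).2 hAB
  by_cases h : ∃ y, PR A B x y
  · obtain ⟨y, hy⟩ := h
    rw [GG_eq hAB hy]
    exact GG_eq hd ((PR_shift A B x y z).2 hy)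
  · have h1 : GG A B x = x := by unfold GG; rw [dif_neg h]
    have h2 : ¬ ∃ y, PR (A.image (· + z)) (B.image (· + z)) (x + z) y := by
      rintro ⟨y, hy⟩
      apply h
      refine ⟨y - z, (PR_shift A B x (y - z) z).1 ?_⟩
      rwa [sub_add_cancel]
    rw [h1]; unfold GG; rw [dif_neg h2]

open Classical in
/-- The finite set underlying `S`, or the empty set if `S` is infinite. -/
def fin (S : Set (Site d)) : Finset (Site d) := if h : S.Finite then h.toFinset else ∅

lemma mem_of_mem_fin {S : Set (Site d)} {x : Site d} (h : x ∈ fin S) : x ∈ S := by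
  unfold fin at h
  split_ifs at h with hf
  · simpa using h
  · simp at h

lemma mem_fin {S : Set (Site d)} (hf : S.Finite) {x : Site d} : x ∈ fin S ↔ x ∈ S := by
  unfold fin
  rw [dif_pos hf]; simp

lemma fin_shift (S T : Set (Site d)) (z : Site d) (h : ∀ x, x + z ∈ T ↔ x ∈ S) :
    fin T = (fin S).image (· + z) := by
  have hT : T = (· + z) '' S := by
    ext y
    constructor
    · intro hy
      exact ⟨y - z, (h (y - z)).1 (by rwa [sub_add_cancel]), by simp⟩
    · rintro ⟨x, hx, rfl⟩
      exact (h x).2 hx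
  by_cases hf : S.Finite
  · have hf' : T.Finite := by rw [hT]; exact hf.image _
    ext y
    rw [mem_fin hf', hT]
    simp [mem_fin hf]
  · have hf' : ¬ T.Finite := by
      rw [hT]; intro h'
      exact hf (Set.Finite.of_finite_image h' (add_left_injective z).injOn)
    unfold fin
    rw [dif_neg hf, dif_neg hf']; simp

lemma measurable_fin (S : Config d → Set (Site d)) (hS : ∀ y, MeasurableSet {γ | y ∈ S γ})
    (F : Finset (Site d)) : MeasurableSet {γ | fin (S γ) = F} := by
  have h1 : ∀ F : Finset (Site d), MeasurableSet {γ | S γ = (F : Set (Site d))} := by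
    intro F
    have : {γ | S γ = (F : Set (Site d))} = ⋂ y, {γ | y ∈ S γ ↔ y ∈ F} := by
      ext γ; simp [Set.ext_iff]
    rw [this]
    refine MeasurableSet.iInter fun y => ?_
    by_cases hy : y ∈ F
    · simpa [hy] using hS y
    · have := (hS y).compl
      simp only [hy, iff_false]
      exact this
  have h2 : MeasurableSet {γ | (S γ).Finite} := by
    have : {γ | (S γ).Finite} = ⋃ F : Finset (Site d), {γ | S γ = (F : Set (Site d))} := by
      ext γ
      simp only [Set.mem_ofPred_eq, Set.mem_iUnion]
      constructor
      · intro h; exact ⟨h.toFinset, by simp⟩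
      · rintro ⟨F, hF⟩; rw [hF]; exact F.finite_toSet
    rw [this]
    exact MeasurableSet.iUnion fun F => h1 F
  have : {γ | fin (S γ) = F} = {γ | S γ = (F : Set (Site d))} ∪
      ({γ | (S γ).Finite}ᶜ ∩ {_γ | F = ∅}) := by
    ext γ
    simp only [Set.mem_ofPred_eq, Set.mem_union, Set.mem_inter_iff, Set.mem_compl_iff]
    by_cases hf : (S γ).Finite
    · simp only [hf, not_true, false_and, or_false]
      rw [← Finset.coe_inj]
      have : (fin (S γ) : Set (Site d)) = S γ := by
        ext x; exact mem_fin hf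
      rw [this]
    · have h3 : ¬ (S γ = (F : Set (Site d))) := fun h => hf (h ▸ F.finite_toSet)
      simp only [hf, h3, not_false_eq_true, true_and, false_or]
      unfold fin
      rw [dif_neg hf]
      exact eq_comm
  rw [this]
  exact (h1 F).union (h2.compl.inter (MeasurableSet.const _))

lemma measurable_GG (S T : Config d → Set (Site d)) (hS : ∀ y, MeasurableSet {γ | y ∈ S γ})
    (hT : ∀ y, MeasurableSet {γ | y ∈ T γ}) (x y : Site d) :
    MeasurableSet {γ | GG (fin (S γ)) (fin (T γ)) x = y} := by
  have : {γ | GG (fin (S γ)) (fin (T γ)) x = y} =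
      ⋃ F : Finset (Site d), ⋃ F' : Finset (Site d),
        ({γ | fin (S γ) = F} ∩ {γ | fin (T γ) = F'}) ∩ {_γ | GG F F' x = y} := by
    ext γ
    simp
  rw [this]
  exact MeasurableSet.iUnion fun F => MeasurableSet.iUnion fun F' =>
    ((measurable_fin S hS F).inter (measurable_fin T hT F')).inter (MeasurableSet.const _)

end RankMatching

section HierarchicalMatching

variable {d : ℕ}

/-- A nested, measurable, translation-equivariant sequence of equivalence relations. -/
structure GoodRel (rel : Config d → ℕ → Site d → Site d → Prop) : Prop where
  refl : ∀ γ k x, rel γ k x x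
  symm : ∀ {γ k x y}, rel γ k x y → rel γ k y x
  trans : ∀ {γ k x y z}, rel γ k x y → rel γ k y z → rel γ k x z
  mono : ∀ {γ k x y}, rel γ k x y → rel γ (k + 1) x y
  meas : ∀ k x y, MeasurableSet {γ | rel γ k x y}
  shift : ∀ γ k x y z, rel (shiftCfg z γ) k (x + z) (y + z) ↔ rel γ k x y

open Classical in
/-- The matching after processing levels `< k`; fixed points are the unmatched sites. -/
def phi (rel : Config d → ℕ → Site d → Site d → Prop) (γ : Config d) : ℕ → Site d → Site d
  | 0, x => x
  | k + 1, x =>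
    if phi rel γ k x = x then
      GG (fin {y | rel γ k x y ∧ phi rel γ k y = y ∧ γ y = true})
        (fin {y | rel γ k x y ∧ phi rel γ k y = y ∧ γ y = false}) x
    else phi rel γ k x

/-- Unmatched sites of type `b` in the cell of `x`. -/
def cand (rel : Config d → ℕ → Site d → Site d → Prop) (γ : Config d) (k : ℕ) (b : Bool)
    (x : Site d) : Set (Site d) := {y | rel γ k x y ∧ phi rel γ k y = y ∧ γ y = b}

variable {rel : Config d → ℕ → Site d → Site d → Prop}

lemma phi_zero (γ : Config d) (x : Site d) : phi rel γ 0 x = x := rfl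

lemma phi_succ_of_eq {γ : Config d} {k : ℕ} {x : Site d} (h : phi rel γ k x = x) :
    phi rel γ (k + 1) x = GG (fin (cand rel γ k true x)) (fin (cand rel γ k false x)) x := by
  rw [phi, if_pos h]; rfl

lemma phi_succ_of_ne {γ : Config d} {k : ℕ} {x : Site d} (h : phi rel γ k x ≠ x) :
    phi rel γ (k + 1) x = phi rel γ k x := by
  rw [phi, if_neg h]

lemma cand_disj (γ : Config d) (k : ℕ) (x : Site d) :
    Disjoint (fin (cand rel γ k true x)) (fin (cand rel γ k false x)) := by
  rw [Finset.disjoint_left]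
  intro a ha hb
  have h1 := (mem_of_mem_fin ha).2.2
  have h2 := (mem_of_mem_fin hb).2.2
  rw [h1] at h2; exact Bool.noConfusion h2

lemma cand_eq (H : GoodRel rel) {γ : Config d} {k : ℕ} {x y : Site d} (h : rel γ k x y)
    (b : Bool) : cand rel γ k b x = cand rel γ k b y := by
  ext z
  constructor
  · rintro ⟨h1, h2⟩; exact ⟨H.trans (H.symm h) h1, h2⟩
  · rintro ⟨h1, h2⟩; exact ⟨H.trans h h1, h2⟩

lemma PR_cand {γ : Config d} {k : ℕ} {x y : Site d}
    (h : PR (fin (cand rel γ k true x)) (fin (cand rel γ k false x)) x y) :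
    rel γ k x y ∧ phi rel γ k y = y ∧ γ y = !γ x := by
  rcases h with ⟨a, b, _⟩ | ⟨a, b, _⟩
  · have h1 := mem_of_mem_fin a
    have h2 := mem_of_mem_fin b
    exact ⟨h2.1, h2.2.1, by rw [h1.2.2, h2.2.2]; rfl⟩
  · have h1 := mem_of_mem_fin a
    have h2 := mem_of_mem_fin b
    exact ⟨h2.1, h2.2.1, by rw [h1.2.2, h2.2.2]; rfl⟩

lemma phi_rel (H : GoodRel rel) (γ : Config d) (k : ℕ) (x : Site d) :
    rel γ k x (phi rel γ (k + 1) x) := by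
  induction k with
  | zero =>
    rw [phi_succ_of_eq (phi_zero γ x)]
    rcases GG_cases (fin (cand rel γ 0 true x)) (fin (cand rel γ 0 false x)) x with h | h
    · rw [h]; exact H.refl _ _ _
    · exact (PR_cand h).1
  | succ k ih =>
    by_cases hx : phi rel γ (k + 1) x = x
    · rw [phi_succ_of_eq hx]
      rcases GG_cases (fin (cand rel γ (k + 1) true x)) (fin (cand rel γ (k + 1) false x)) x
        with h | h
      · rw [h]; exact H.refl _ _ _
      · exact (PR_cand h).1
    · rw [phi_succ_of_ne hx]
      exact H.mono ih

lemma phi_rel' (H : GoodRel rel) (γ : Config d) (k : ℕ) (x : Site d) :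
    rel γ k x (phi rel γ k x) := by
  cases k with
  | zero => exact H.refl _ _ _
  | succ k => exact H.mono (phi_rel H γ k x)

lemma phi_invol (H : GoodRel rel) (γ : Config d) (k : ℕ) (x : Site d) :
    phi rel γ k (phi rel γ k x) = x := by
  induction k generalizing x with
  | zero => rfl
  | succ k ih =>
    by_cases hx : phi rel γ k x = x
    · rw [phi_succ_of_eq hx]
      rcases GG_cases (fin (cand rel γ k true x)) (fin (cand rel γ k false x)) x with h | h
      · rw [h, phi_succ_of_eq hx, h]
      · obtain ⟨h1, h2, h3⟩ := PR_cand h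
        rw [phi_succ_of_eq h2, ← cand_eq H h1, ← cand_eq H h1]
        exact GG_invol (cand_disj γ k x) x
    · rw [phi_succ_of_ne hx]
      have : phi rel γ k (phi rel γ k x) ≠ phi rel γ k x := by
        rw [ih]; exact fun h => hx h.symm
      rw [phi_succ_of_ne this, ih]

lemma phi_flip (γ : Config d) (k : ℕ) (x : Site d) (hx : phi rel γ k x ≠ x) :
    γ (phi rel γ k x) = !γ x := by
  induction k with
  | zero => exact absurd rfl hx
  | succ k ih =>
    by_cases h0 : phi rel γ k x = x
    · rw [phi_succ_of_eq h0] at hx ⊢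
      rcases GG_cases (fin (cand rel γ k true x)) (fin (cand rel γ k false x)) x with h | h
      · exact absurd h hx
      · exact (PR_cand h).2.2
    · rw [phi_succ_of_ne h0]; exact ih h0

lemma phi_stable (γ : Config d) {k j : ℕ} (hkj : k ≤ j) {x : Site d}
    (hx : phi rel γ k x ≠ x) : phi rel γ j x = phi rel γ k x := by
  induction j, hkj using Nat.le_induction with
  | base => rfl
  | succ j _ ih =>
    rw [phi_succ_of_ne (by rw [ih]; exact hx), ih]

lemma shiftCfg_add (γ : Config d) (x z : Site d) : shiftCfg z γ (x + z) = γ x := by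
  simp [shiftCfg]

lemma phi_shift (H : GoodRel rel) (γ : Config d) (k : ℕ) (x z : Site d) :
    phi rel (shiftCfg z γ) k (x + z) = phi rel γ k x + z := by
  induction k generalizing x with
  | zero => rfl
  | succ k ih =>
    have hc : ∀ b, fin (cand rel (shiftCfg z γ) k b (x + z))
        = (fin (cand rel γ k b x)).image (· + z) := by
      intro b
      apply fin_shift
      intro y
      have e : (phi rel γ k y + z = y + z) ↔ phi rel γ k y = y := add_left_inj z
      simp only [cand, Set.mem_ofPred_eq, H.shift, ih, shiftCfg_add]
      rw [e]
    by_cases hx : phi rel γ k x = x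
    · rw [phi_succ_of_eq hx, phi_succ_of_eq (by rw [ih, hx]), hc, hc,
        GG_shift (cand_disj γ k x)]
    · rw [phi_succ_of_ne hx, phi_succ_of_ne (by rw [ih]; simpa using hx), ih]

lemma phi_meas (H : GoodRel rel) (k : ℕ) (x y : Site d) :
    MeasurableSet {γ | phi rel γ k x = y} := by
  induction k generalizing x y with
  | zero => exact MeasurableSet.const (x = y)
  | succ k ih =>
    have hc : ∀ (b : Bool) (w : Site d), MeasurableSet {γ : Config d | w ∈ cand rel γ k b x} := by
      intro b w
      have : {γ : Config d | w ∈ cand rel γ k b x} =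
          {γ | rel γ k x w} ∩ ({γ | phi rel γ k w = w} ∩ (fun γ : Config d => γ w) ⁻¹' {b}) := rfl
      rw [this]
      exact (H.meas k x w).inter ((ih w w).inter
        ((measurable_pi_apply w) (MeasurableSet.singleton b)))
    have : {γ | phi rel γ (k + 1) x = y} =
        ({γ | phi rel γ k x = x} ∩
          {γ | GG (fin (cand rel γ k true x)) (fin (cand rel γ k false x)) x = y}) ∪
        ({γ | phi rel γ k x = x}ᶜ ∩ {γ | phi rel γ k x = y}) := by
      ext γ
      simp only [Set.mem_ofPred_eq, Set.mem_union, Set.mem_inter_iff, Set.mem_compl_iff]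
      by_cases hx : phi rel γ k x = x
      · rw [phi_succ_of_eq hx]; simp [hx]
      · rw [phi_succ_of_ne hx]; simp [hx]
    rw [this]
    exact ((ih x x).inter (measurable_GG _ _ (hc true) (hc false) x y)).union
      ((ih x x).compl.inter (ih x y))

open Classical in
lemma phi_count (H : GoodRel rel) (γ : Config d) (k : ℕ) (x : Site d)
    (L : Finset (Site d)) (hL : ∀ y, y ∈ L ↔ rel γ k x y) :
    ((L.filter (fun y => phi rel γ (k + 1) y = y)).card : ℤ) ≤ |∑ y ∈ L, pm1 γ y| := by
  have hfin : ∀ b, (cand rel γ k b x).Finite := fun b =>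
    L.finite_toSet.subset fun y hy => (hL y).2 hy.1
  set A := fin (cand rel γ k true x) with hA
  set B := fin (cand rel γ k false x) with hB
  have hAB : Disjoint A B := cand_disj γ k x
  have mA : ∀ y, y ∈ A ↔ y ∈ L ∧ phi rel γ k y = y ∧ γ y = true := by
    intro y; rw [hA, mem_fin (hfin true), hL]; rfl
  have mB : ∀ y, y ∈ B ↔ y ∈ L ∧ phi rel γ k y = y ∧ γ y = false := by
    intro y; rw [hB, mem_fin (hfin false), hL]; rfl
  have h1 : (L.filter (fun y => phi rel γ (k + 1) y = y)) ⊆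
      (A ∪ B).filter (fun y => GG A B y = y) := by
    intro y hy
    rw [Finset.mem_filter] at hy ⊢
    obtain ⟨hyL, hy⟩ := hy
    have h0 : phi rel γ k y = y := by
      by_contra h0
      rw [phi_succ_of_ne h0] at hy
      exact h0 hy
    have hr := (hL y).1 hyL
    refine ⟨?_, ?_⟩
    · rw [Finset.mem_union, mA, mB]
      cases h : γ y <;> simp [hyL, h0]
    · rw [phi_succ_of_eq h0, ← cand_eq H hr, ← cand_eq H hr] at hy
      exact hy
  have h2 : ∑ y ∈ L, pm1 γ y = (A.card : ℤ) - B.card := by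
    rw [← Finset.sum_filter_add_sum_filter_not L (fun y => phi rel γ k y = y)]
    have e1 : ∑ y ∈ L.filter (fun y => ¬ phi rel γ k y = y), pm1 γ y = 0 := by
      refine Finset.sum_involution (fun y _ => phi rel γ k y) ?_ ?_ ?_ ?_
      · intro y hy
        have := phi_flip γ k y (Finset.mem_filter.1 hy).2
        unfold pm1
        rw [this]
        cases γ y <;> simp
      · intro y hy _
        exact (Finset.mem_filter.1 hy).2
      · intro y hy
        rw [Finset.mem_filter] at hy ⊢
        refine ⟨(hL _).2 (H.trans ((hL y).1 hy.1) (phi_rel' H γ k y)), ?_⟩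
        rw [phi_invol H]
        exact fun h => hy.2 h.symm
      · intro y hy
        exact phi_invol H γ k y
    have e2 : L.filter (fun y => phi rel γ k y = y) = A ∪ B := by
      ext y
      rw [Finset.mem_filter, Finset.mem_union, mA, mB]
      cases h : γ y <;> simp
    rw [e1, add_zero, e2, Finset.sum_union hAB]
    have e3 : ∑ y ∈ A, pm1 γ y = A.card := by
      rw [Finset.sum_congr rfl (g := fun _ => (1 : ℤ))]
      · simp
      · intro y hy; simp [pm1, ((mA y).1 hy).2.2]
    have e4 : ∑ y ∈ B, pm1 γ y = -B.card := by
      rw [Finset.sum_congr rfl (g := fun _ => (-1 : ℤ))]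
      · simp
      · intro y hy; simp [pm1, ((mB y).1 hy).2.2]
    rw [e3, e4]; ring
  have h3 := (Finset.card_le_card h1).trans (GG_count hAB)
  rw [h2]
  rcases le_total (A.card : ℤ) B.card with h | h
  · rw [abs_of_nonpos (by linarith)]
    omega
  · rw [abs_of_nonneg (by linarith)]
    omega

open Classical in
/-- The limiting matching. -/
def Phi (rel : Config d → ℕ → Site d → Site d → Prop) (γ : Config d) (x : Site d) : Site d :=
  if h : ∃ k, phi rel γ k x ≠ x then phi rel γ h.choose x else x

lemma Phi_eq {γ : Config d} {k : ℕ} {x : Site d} (hx : phi rel γ k x ≠ x) :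
    Phi rel γ x = phi rel γ k x := by
  have h : ∃ k, phi rel γ k x ≠ x := ⟨k, hx⟩
  unfold Phi
  rw [dif_pos h]
  rcases le_total k h.choose with h1 | h1
  · exact phi_stable γ h1 hx
  · exact (phi_stable γ h1 h.choose_spec).symm

lemma Phi_eq_self {γ : Config d} {x : Site d} (h : ∀ k, phi rel γ k x = x) :
    Phi rel γ x = x := by
  unfold Phi
  rw [dif_neg]
  push Not
  exact h

lemma Phi_shift (H : GoodRel rel) (γ : Config d) (x z : Site d) :
    Phi rel (shiftCfg z γ) (x + z) = Phi rel γ x + z := by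
  by_cases h : ∃ k, phi rel γ k x ≠ x
  · obtain ⟨k, hk⟩ := h
    rw [Phi_eq hk, Phi_eq (k := k) (by rw [phi_shift H]; simpa using hk), phi_shift H]
  · push Not at h
    rw [Phi_eq_self h, Phi_eq_self]
    intro k
    rw [phi_shift H, h]

lemma Phi_meas (H : GoodRel rel) (x : Site d) : Measurable fun γ => Phi rel γ x := by
  have key : ∀ y, y ≠ x → {γ | Phi rel γ x = y} = ⋃ k, {γ | phi rel γ k x = y} := by
    intro y hy
    ext γ
    simp only [Set.mem_ofPred_eq, Set.mem_iUnion]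
    constructor
    · intro h
      by_cases h' : ∃ k, phi rel γ k x ≠ x
      · obtain ⟨k, hk⟩ := h'
        exact ⟨k, by rw [← Phi_eq hk, h]⟩
      · push Not at h'
        rw [Phi_eq_self h'] at h
        exact absurd h.symm hy
    · rintro ⟨k, hk⟩
      rw [Phi_eq (k := k) (by rw [hk]; exact hy), hk]
  have keym : ∀ y, y ≠ x → MeasurableSet {γ | Phi rel γ x = y} := by
    intro y hy
    rw [key y hy]
    exact MeasurableSet.iUnion fun k => phi_meas H k x y
  apply measurable_to_countable'
  intro y
  by_cases hy : y = x
  · have : (fun γ => Phi rel γ x) ⁻¹' {y} =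
        (⋃ w : {w : Site d // w ≠ x}, {γ | Phi rel γ x = w})ᶜ := by
      ext γ
      simp only [Set.mem_preimage, Set.mem_singleton_iff, Set.mem_compl_iff, Set.mem_iUnion,
        Set.mem_ofPred_eq, hy]
      constructor
      · rintro h ⟨w, hw⟩
        exact w.2 (hw.symm.trans h)
      · intro h
        by_contra h'
        exact h ⟨⟨_, h'⟩, rfl⟩
    rw [this]
    exact (MeasurableSet.iUnion fun w : {w : Site d // w ≠ x} => keym w.1 w.2).compl
  · exact keym y hy

lemma Phi_matching (H : GoodRel rel) (γ : Config d) (h : ∀ x, ∃ k, phi rel γ k x ≠ x) :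
    IsMatching γ (Phi rel γ) := by
  have hi : ∀ x, Phi rel γ (Phi rel γ x) = x := by
    intro x
    obtain ⟨k, hk⟩ := h x
    rw [Phi_eq hk, Phi_eq (k := k), phi_invol H]
    rw [phi_invol H]; exact fun h => hk h.symm
  refine ⟨Function.Involutive.bijective hi, hi, fun x => ?_⟩
  obtain ⟨k, hk⟩ := h x
  rw [Phi_eq hk]
  exact phi_flip γ k x hk

/-- If `x` is matched after level `k` then its partner lies in its level-`k` cell. -/
lemma Phi_rel (H : GoodRel rel) (γ : Config d) (k : ℕ) (x : Site d)
    (h : phi rel γ (k + 1) x ≠ x) : rel γ k x (Phi rel γ x) := by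
  rw [Phi_eq h]; exact phi_rel H γ k x

end HierarchicalMatching

section ProbabilityBasics

variable {d : ℕ}

lemma measurable_cyl (s : Finset (Site d)) (f : Site d → Bool) :
    MeasurableSet {γ : Config d | ∀ x ∈ s, γ x = f x} := by
  have : {γ : Config d | ∀ x ∈ s, γ x = f x}
      = ⋂ x ∈ s, (fun γ : Config d => γ x) ⁻¹' {f x} := by
    ext γ; simp
  rw [this]
  exact MeasurableSet.biInter s.countable_toSet fun x _ =>
    (measurable_pi_apply x) (MeasurableSet.singleton _)

open Classical in
lemma bernoulli_unique {P Q : Measure (Config d)} (hP : IsBernoulliHalfProduct P)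
    (hQ : IsBernoulliHalfProduct Q) : P = Q := by
  have := hP.1
  have := hQ.1
  set C : Set (Set (Config d)) :=
    {S | S = ∅ ∨ ∃ (s : Finset (Site d)) (f : Site d → Bool), S = {γ | ∀ x ∈ s, γ x = f x}} with hC
  refine ext_of_generate_finite C ?_ ?_ ?_ ?_
  · apply le_antisymm
    · have h1 : ∀ x : Site d, @Measurable (Config d) Bool
          (MeasurableSpace.generateFrom C) _ (fun γ => γ x) := by
        intro x
        refine @measurable_to_countable' Bool (Config d) _ _ (MeasurableSpace.generateFrom C) _ ?_
        intro b
        apply MeasurableSpace.measurableSet_generateFrom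
        right
        refine ⟨{x}, fun _ => b, ?_⟩
        ext γ; simp
      have h2 : @Measurable (Config d) (Config d) (MeasurableSpace.generateFrom C) _
          (fun γ => γ) := by
        refine @measurable_pi_lambda _ _ _ (MeasurableSpace.generateFrom C) _ _ ?_
        exact h1
      intro S hS
      exact h2 hS
    · apply MeasurableSpace.generateFrom_le
      rintro S (rfl | ⟨s, f, rfl⟩)
      · exact MeasurableSet.empty
      · exact measurable_cyl s f
  · rintro S (rfl | ⟨s, f, rfl⟩) T (rfl | ⟨t, g, rfl⟩) hne
    · left; simp
    · left; simp
    · left; simp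
    · right
      obtain ⟨γ, h1, h2⟩ := hne
      refine ⟨s ∪ t, γ, ?_⟩
      ext η
      simp only [Set.mem_inter_iff, Set.mem_ofPred_eq, Finset.mem_union] at h1 h2 ⊢
      constructor
      · rintro ⟨a, b⟩ x (hx | hx)
        · rw [a x hx, h1 x hx]
        · rw [b x hx, h2 x hx]
      · intro h
        exact ⟨fun x hx => by rw [h x (Or.inl hx), h1 x hx],
          fun x hx => by rw [h x (Or.inr hx), h2 x hx]⟩
  · rintro S (rfl | ⟨s, f, rfl⟩)
    · simp
    · rw [hP.2, hQ.2]
  · simp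

lemma measurable_shiftCfg (z : Site d) : Measurable (shiftCfg z : Config d → Config d) := by
  apply measurable_pi_lambda
  intro x
  exact measurable_pi_apply (x - z)

lemma shift_mp {P : Measure (Config d)} (hP : IsBernoulliHalfProduct P) (z : Site d) :
    MeasurePreserving (shiftCfg z) P P := by
  have := hP.1
  refine ⟨measurable_shiftCfg z, ?_⟩
  apply bernoulli_unique _ hP
  refine ⟨Measure.isProbabilityMeasure_map (measurable_shiftCfg z).aemeasurable, fun s f => ?_⟩
  rw [Measure.map_apply (measurable_shiftCfg z) (measurable_cyl s f)]
  have : shiftCfg z ⁻¹' {γ : Config d | ∀ x ∈ s, γ x = f x} =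
      {γ : Config d | ∀ x ∈ s.map (Equiv.subRight z).toEmbedding, γ x = f (x + z)} := by
    ext γ
    simp only [shiftCfg, Set.mem_preimage, Set.mem_ofPred_eq, Finset.mem_map_equiv,
      Equiv.subRight_symm_apply]
    constructor
    · intro h x hx
      have := h (x + z) hx
      rwa [add_sub_cancel_right] at this
    · intro h x hx
      have := h (x - z) (by rwa [sub_add_cancel])
      rwa [sub_add_cancel] at this
  rw [this, hP.2 (s.map (Equiv.subRight z).toEmbedding) (fun x => f (x + z)), Finset.card_map]

open Classical in
/-- Indicator of a proposition with values in `ℝ≥0∞`. -/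
def ind (p : Prop) : ℝ≥0∞ := if p then 1 else 0

lemma measurable_ind {p : Config d → Prop} (h : MeasurableSet {γ | p γ}) :
    Measurable fun γ => ind (p γ) := by
  classical
  unfold ind
  exact Measurable.ite h measurable_const measurable_const

lemma lintegral_ind {P : Measure (Config d)} {p : Config d → Prop}
    (h : MeasurableSet {γ | p γ}) : ∫⁻ γ, ind (p γ) ∂P = P {γ | p γ} := by
  classical
  rw [← lintegral_indicator_one h]
  rfl

variable {rel : Config d → ℕ → Site d → Site d → Prop}

/-- Size of the level-`k` cell of `x`. -/
def NN (rel : Config d → ℕ → Site d → Site d → Prop) (k : ℕ) (γ : Config d) (x : Site d) : ℝ≥0∞ :=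
  ∑' y, ind (rel γ k x y)

lemma transport {P : Measure (Config d)} (hP : IsBernoulliHalfProduct P) (H : GoodRel rel)
    (k : ℕ) (hfin : ∀ᵐ γ ∂P, {y | rel γ k 0 y}.Finite) (h : Config d → Site d → ℝ≥0∞)
    (hm : ∀ x, Measurable fun γ => h γ x)
    (hs : ∀ γ x z, h (shiftCfg z γ) (x + z) = h γ x) :
    ∫⁻ γ, ∑' y, ind (rel γ k 0 y) * (h γ y / NN rel k γ y) ∂P = ∫⁻ γ, h γ 0 ∂P := by
  have hN : ∀ x, Measurable fun γ => NN rel k γ x := fun x =>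
    Measurable.tsum fun y => measurable_ind (H.meas k x y)
  have hNs : ∀ γ x z, NN rel k (shiftCfg z γ) (x + z) = NN rel k γ x := by
    intro γ x z
    unfold NN
    rw [← Equiv.tsum_eq (Equiv.addRight z)]
    apply tsum_congr
    intro y
    simp only [Equiv.coe_addRight, H.shift]
  set T : Config d → Site d → Site d → ℝ≥0∞ :=
    fun γ x y => ind (rel γ k x y) * (h γ y / NN rel k γ y) with hT
  have hTm : ∀ x y, Measurable fun γ => T γ x y := fun x y =>
    (measurable_ind (H.meas k x y)).mul ((hm y).div (hN y))
  have hTs : ∀ γ x y z, T (shiftCfg z γ) (x + z) (y + z) = T γ x y := by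
    intro γ x y z
    simp only [hT, H.shift, hs, hNs]
  have e1 : ∫⁻ γ, ∑' y, T γ 0 y ∂P = ∑' y, ∫⁻ γ, T γ 0 y ∂P :=
    lintegral_tsum fun y => (hTm 0 y).aemeasurable
  have e2 : ∀ y, ∫⁻ γ, T γ 0 y ∂P = ∫⁻ γ, T γ (-y) 0 ∂P := by
    intro y
    rw [← (shift_mp hP (-y)).lintegral_comp (hTm (-y) 0)]
    congr 1
    ext γ
    have := hTs γ 0 y (-y)
    rw [zero_add, add_neg_cancel] at this
    exact this.symm
  have e3 : ∫⁻ γ, ∑' y, T γ y 0 ∂P = ∑' y, ∫⁻ γ, T γ y 0 ∂P :=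
    lintegral_tsum fun y => (hTm y 0).aemeasurable
  have e4 : ∑' y, ∫⁻ γ, T γ (-y) 0 ∂P = ∑' y, ∫⁻ γ, T γ y 0 ∂P :=
    Equiv.tsum_eq (Equiv.neg (Site d)) (fun y => ∫⁻ γ, T γ y 0 ∂P)
  rw [e1, tsum_congr e2, e4, ← e3]
  apply lintegral_congr_ae
  filter_upwards [hfin] with γ hγ
  simp only [hT]
  rw [ENNReal.tsum_mul_right]
  have e5 : ∑' y, ind (rel γ k y 0) = NN rel k γ 0 := by
    unfold NN
    apply tsum_congr
    intro y
    congr 1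
    exact propext ⟨H.symm, H.symm⟩
  rw [e5]
  apply ENNReal.mul_div_cancel
  · have : ind (rel γ k 0 0) ≤ NN rel k γ 0 := ENNReal.le_tsum 0
    intro h0
    rw [h0] at this
    simp [ind, H.refl] at this
  · unfold NN
    have : ∑' y, ind (rel γ k 0 y) = ∑ y ∈ hγ.toFinset, ind (rel γ k 0 y) := by
      apply tsum_eq_sum
      intro y hy
      have : ¬ rel γ k 0 y := by simpa using hy
      simp [ind, this]
    rw [this]
    apply (ENNReal.sum_lt_top.2 _).ne
    intro y _
    unfold ind
    split_ifs <;> simp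

lemma transport_le {P : Measure (Config d)} (hP : IsBernoulliHalfProduct P) (H : GoodRel rel)
    (k : ℕ) (hfin : ∀ᵐ γ ∂P, {y | rel γ k 0 y}.Finite) (f g : Config d → Site d → ℝ≥0∞)
    (hfm : ∀ x, Measurable fun γ => f γ x) (hgm : ∀ x, Measurable fun γ => g γ x)
    (hfs : ∀ γ x z, f (shiftCfg z γ) (x + z) = f γ x)
    (hgs : ∀ γ x z, g (shiftCfg z γ) (x + z) = g γ x)
    (hfg : ∀ γ (L : Finset (Site d)), (∀ y, y ∈ L ↔ rel γ k 0 y) →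
      ∑ y ∈ L, f γ y ≤ ∑ y ∈ L, g γ y) :
    ∫⁻ γ, f γ 0 ∂P ≤ ∫⁻ γ, g γ 0 ∂P := by
  rw [← transport hP H k hfin f hfm hfs, ← transport hP H k hfin g hgm hgs]
  apply lintegral_mono_ae
  filter_upwards [hfin] with γ hγ
  have key : ∀ h : Config d → Site d → ℝ≥0∞,
      ∑' y, ind (rel γ k 0 y) * (h γ y / NN rel k γ y)
        = (∑ y ∈ hγ.toFinset, h γ y) / NN rel k γ 0 := by
    intro h
    rw [tsum_eq_sum (s := hγ.toFinset)]
    · rw [div_eq_mul_inv, Finset.sum_mul]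
      apply Finset.sum_congr rfl
      intro y hy
      have hy : rel γ k 0 y := by simpa using hy
      have : NN rel k γ y = NN rel k γ 0 := by
        unfold NN
        apply tsum_congr
        intro w
        congr 1
        exact propext ⟨fun h => H.trans hy h, fun h => H.trans (H.symm hy) h⟩
      rw [this]
      simp [ind, hy, div_eq_mul_inv]
    · intro y hy
      have : ¬ rel γ k 0 y := by simpa using hy
      simp [ind, this]
  rw [key, key]
  refine ENNReal.div_le_div_right (hfg γ _ ?_) _
  intro y
  simp

open Classical in
lemma det_ineq (L D B : Finset (Site d)) (σ : Site d → ℝ) (hσ : ∀ x, |σ x| ≤ 1)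
    (hB : B.Nonempty)
    (hD : ∀ x ∈ L, x ∉ D → ∀ b ∈ B, x + b ∈ L ∧ x - b ∈ L) :
    |∑ x ∈ L, σ x| ≤ ∑ x ∈ L, |∑ b ∈ B, σ (x + b)| / B.card + 2 * D.card := by
  have hc : (0 : ℝ) < B.card := by exact_mod_cast hB.card_pos
  have hcard : ∀ S : Finset (Site d), |∑ x ∈ S, σ x| ≤ S.card := by
    intro S
    refine (Finset.abs_sum_le_sum_abs _ _).trans ?_
    refine (Finset.sum_le_sum (fun x _ => hσ x)).trans ?_
    simp
  have h1 : ∀ b ∈ B, |∑ x ∈ L, σ x - ∑ x ∈ L, σ (x + b)| ≤ 2 * D.card := by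
    intro b hb
    have e : ∑ x ∈ L, σ (x + b) = ∑ x ∈ L.image (· + b), σ x := by
      rw [Finset.sum_image]
      intro x _ y _ h
      exact add_left_injective b h
    rw [e, ← Finset.sum_sdiff_sub_sum_sdiff]
    have c1 : (L \ L.image (· + b)).card ≤ D.card := by
      apply Finset.card_le_card
      intro x hx
      rw [Finset.mem_sdiff] at hx
      by_contra hxD
      apply hx.2
      exact Finset.mem_image.2 ⟨x - b, (hD x hx.1 hxD b hb).2, by simp⟩
    have c2 : (L.image (· + b) \ L).card ≤ D.card := by
      refine le_trans (Finset.card_le_card (t := D.image (· + b)) ?_) Finset.card_image_le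
      intro y hy
      rw [Finset.mem_sdiff, Finset.mem_image] at hy
      obtain ⟨⟨x, hx, rfl⟩, hy⟩ := hy
      apply Finset.mem_image_of_mem
      by_contra hxD
      exact hy (hD x hx hxD b hb).1
    have c1' : ((L \ L.image (· + b)).card : ℝ) ≤ D.card := by exact_mod_cast c1
    have c2' : ((L.image (· + b) \ L).card : ℝ) ≤ D.card := by exact_mod_cast c2
    refine (abs_sub _ _).trans ?_
    linarith [hcard (L \ L.image (· + b)), hcard (L.image (· + b) \ L)]
  have h2 : |(B.card : ℝ) * ∑ x ∈ L, σ x - ∑ x ∈ L, ∑ b ∈ B, σ (x + b)| ≤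
      B.card * (2 * D.card) := by
    rw [Finset.sum_comm]
    have : (B.card : ℝ) * ∑ x ∈ L, σ x - ∑ b ∈ B, ∑ x ∈ L, σ (x + b) =
        ∑ b ∈ B, (∑ x ∈ L, σ x - ∑ x ∈ L, σ (x + b)) := by
      rw [Finset.sum_sub_distrib]; simp
    rw [this]
    refine (Finset.abs_sum_le_sum_abs _ _).trans ?_
    refine (Finset.sum_le_sum h1).trans ?_
    simp
  have h3 : |∑ x ∈ L, ∑ b ∈ B, σ (x + b)| ≤ ∑ x ∈ L, |∑ b ∈ B, σ (x + b)| :=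
    Finset.abs_sum_le_sum_abs _ _
  rw [← Finset.sum_div, ← sub_le_iff_le_add, le_div_iff₀ hc]
  have h4 : (B.card : ℝ) * |∑ x ∈ L, σ x| ≤
      B.card * (2 * D.card) + ∑ x ∈ L, |∑ b ∈ B, σ (x + b)| := by
    rw [← abs_of_pos hc, ← abs_mul, abs_of_pos hc]
    have := abs_sub_abs_le_abs_sub ((B.card : ℝ) * ∑ x ∈ L, σ x) (∑ x ∈ L, ∑ b ∈ B, σ (x + b))
    linarith
  linarith

end ProbabilityBasics

section Unmatched

variable {d : ℕ}

/-- `v` lies in the `ℓ^∞` ball of radius `R`. -/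
def inB (R : ℕ) (v : Site d) : Prop := ∀ i, |v i| ≤ (R : ℤ)

/-- Real-valued spin. -/
def sg (γ : Config d) (x : Site d) : ℝ := (pm1 γ x : ℝ)

lemma sg_abs (γ : Config d) (x : Site d) : |sg γ x| ≤ 1 := by
  unfold sg pm1
  split_ifs <;> simp

lemma sg_sq (γ : Config d) (x : Site d) : sg γ x * sg γ x = 1 := by
  unfold sg pm1
  split_ifs <;> simp

lemma sg_meas (x : Site d) : Measurable fun γ : Config d => sg γ x := by
  have : (fun γ : Config d => sg γ x) =
      (fun b : Bool => ((if b then 1 else -1 : ℤ) : ℝ)) ∘ (fun γ : Config d => γ x) := rfl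
  rw [this]
  exact Measurable.comp (measurable_of_countable _) (measurable_pi_apply x)

open Classical in
lemma pair_prob {P : Measure (Config d)} (hP : IsBernoulliHalfProduct P) {x y : Site d}
    (hxy : x ≠ y) : P {γ | γ x ≠ γ y} = 1 / 2 := by
  have hb : ∀ a b : Bool, P {γ | γ x = a ∧ γ y = b} = (1 / 2 : ℝ≥0∞) ^ 2 := by
    intro a b
    have := hP.2 {x, y} (fun w => if w = x then a else b)
    rw [Finset.card_pair hxy] at this
    rw [← this]
    congr 1
    ext γ
    simp [hxy.symm]
  have e : {γ : Config d | γ x ≠ γ y} =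
      {γ | γ x = true ∧ γ y = false} ∪ {γ | γ x = false ∧ γ y = true} := by
    ext γ
    simp only [Set.mem_ofPred_eq, Set.mem_union]
    cases γ x <;> cases γ y <;> simp
  rw [e, measure_union, hb, hb]
  · rw [← two_mul, pow_two, one_div, ← mul_assoc, ENNReal.mul_inv_cancel two_ne_zero ofNat_ne_top,
      one_mul]
  · rw [Set.disjoint_left]
    rintro γ ⟨h1, _⟩ ⟨h2, _⟩
    rw [h1] at h2; exact Bool.noConfusion h2
  · have m1 : MeasurableSet ((fun γ : Config d => γ x) ⁻¹' {false}) :=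
      (measurable_pi_apply x) (MeasurableSet.singleton false)
    have m2 : MeasurableSet ((fun γ : Config d => γ y) ⁻¹' {true}) :=
      (measurable_pi_apply y) (MeasurableSet.singleton true)
    exact m1.inter m2

lemma sg_mul_integrable {P : Measure (Config d)} (hP : IsBernoulliHalfProduct P) (x y : Site d) :
    Integrable (fun γ => sg γ x * sg γ y) P := by
  have := hP.1
  apply Integrable.of_bound (((sg_meas x).mul (sg_meas y)).aestronglyMeasurable) 1
  filter_upwards with γ
  rw [Real.norm_eq_abs, Pi.mul_apply, abs_mul]
  exact mul_le_one₀ (sg_abs γ x) (abs_nonneg _) (sg_abs γ y)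

open Classical in
lemma sg_orth {P : Measure (Config d)} (hP : IsBernoulliHalfProduct P) (x y : Site d) :
    ∫ γ, sg γ x * sg γ y ∂P = if x = y then 1 else 0 := by
  have := hP.1
  split_ifs with h
  · subst h
    simp [sg_sq]
  · have hm : MeasurableSet {γ : Config d | γ x ≠ γ y} := by
      have : MeasurableSet {γ : Config d | γ x = γ y} :=
        measurableSet_eq_fun (measurable_pi_apply x) (measurable_pi_apply y)
      exact this.compl
    have e : ∀ γ : Config d, sg γ x * sg γ y =
        1 - 2 * {γ : Config d | γ x ≠ γ y}.indicator (fun _ => (1 : ℝ)) γ := by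
      intro γ
      simp only [Set.indicator, Set.mem_ofPred_eq, sg, pm1]
      cases γ x <;> cases γ y <;> norm_num
    simp_rw [e]
    rw [integral_sub (integrable_const _)
      (((integrable_const (1 : ℝ)).indicator hm).const_mul 2), integral_const_mul,
      integral_indicator hm]
    simp [measureReal_def, pair_prob hP h]

open Classical in
lemma second_moment {P : Measure (Config d)} (hP : IsBernoulliHalfProduct P)
    (B : Finset (Site d)) : ∫ γ, (∑ b ∈ B, sg γ b) ^ 2 ∂P = B.card := by
  have e : ∀ γ : Config d, (∑ b ∈ B, sg γ b) ^ 2 = ∑ b ∈ B, ∑ c ∈ B, sg γ b * sg γ c := by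
    intro γ; rw [pow_two, Finset.sum_mul_sum]
  simp_rw [e]
  rw [integral_finsetSum]
  · have : ∀ b ∈ B, ∫ γ, ∑ c ∈ B, sg γ b * sg γ c ∂P = 1 := by
      intro b hb
      rw [integral_finsetSum]
      · simp [sg_orth hP, hb]
      · intro c _; exact sg_mul_integrable hP b c
    rw [Finset.sum_congr rfl this]; simp
  · intro b _
    exact integrable_finsetSum _ fun c _ => sg_mul_integrable hP b c

lemma first_moment {P : Measure (Config d)} (hP : IsBernoulliHalfProduct P)
    (B : Finset (Site d)) (hB : B.Nonempty) :
    ∫⁻ γ, ENNReal.ofReal (|∑ b ∈ B, sg γ b| / B.card) ∂P ≤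
      ENNReal.ofReal (1 / Real.sqrt B.card) := by
  have := hP.1
  have hc : (0 : ℝ) < B.card := by exact_mod_cast hB.card_pos
  have ha : 0 < Real.sqrt B.card := Real.sqrt_pos.2 hc
  have hsq : Real.sqrt B.card * Real.sqrt B.card = B.card := Real.mul_self_sqrt hc.le
  set a := Real.sqrt B.card with hadef
  have hIntg : Integrable (fun γ => (∑ b ∈ B, sg γ b) ^ 2) P := by
    have e : ∀ γ : Config d, (∑ b ∈ B, sg γ b) ^ 2 = ∑ b ∈ B, ∑ c ∈ B, sg γ b * sg γ c := by
      intro γ; rw [pow_two, Finset.sum_mul_sum]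
    simp_rw [e]
    exact integrable_finsetSum _ fun b _ => integrable_finsetSum _ fun c _ =>
      sg_mul_integrable hP b c
  have hint2 : Integrable (fun γ => ((∑ b ∈ B, sg γ b) ^ 2 / a + a) / 2 / B.card) P :=
    (((hIntg.div_const a).add (integrable_const a)).div_const 2).div_const _
  calc ∫⁻ γ, ENNReal.ofReal (|∑ b ∈ B, sg γ b| / B.card) ∂P
      ≤ ∫⁻ γ, ENNReal.ofReal (((∑ b ∈ B, sg γ b) ^ 2 / a + a) / 2 / B.card) ∂P := by
        apply lintegral_mono
        intro γ
        apply ENNReal.ofReal_le_ofReal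
        apply div_le_div_of_nonneg_right _ hc.le
        rw [le_div_iff₀ two_pos, div_add' _ _ _ ha.ne', le_div_iff₀ ha, ← sq_abs]
        nlinarith [sq_nonneg (|∑ b ∈ B, sg γ b| - a)]
    _ = ENNReal.ofReal (∫ γ, ((∑ b ∈ B, sg γ b) ^ 2 / a + a) / 2 / B.card ∂P) := by
        rw [ofReal_integral_eq_lintegral_ofReal hint2]
        filter_upwards with γ
        positivity
    _ = ENNReal.ofReal (1 / a) := by
        congr 1
        rw [integral_div, integral_div, integral_add (hIntg.div_const a) (integrable_const a),
          integral_div, second_moment hP]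
        simp only [integral_const, probReal_univ, one_smul]
        rw [← hsq]
        field_simp
        norm_num

variable {rel : Config d → ℕ → Site d → Site d → Prop}

/-- The event that the ball of radius `s` around `x` is not contained in the cell of `x`. -/
def cut (rel : Config d → ℕ → Site d → Site d → Prop) (k s : ℕ) (γ : Config d) (x : Site d) :
    Prop := ∃ v : Site d, inB s v ∧ ¬ rel γ k x (x + v)

lemma cut_meas (H : GoodRel rel) (k s : ℕ) (x : Site d) :
    MeasurableSet {γ | cut rel k s γ x} := by
  have : {γ | cut rel k s γ x} = ⋃ v : Site d, ({_γ | inB s v} ∩ {γ | rel γ k x (x + v)}ᶜ) := by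
    ext γ; simp [cut]
  rw [this]
  exact MeasurableSet.iUnion fun v => (MeasurableSet.const _).inter (H.meas k x _).compl

lemma sum_ind (L : Finset (Site d)) (p : Site d → Prop) [DecidablePred p] :
    ∑ y ∈ L, ind (p y) = ((L.filter p).card : ℝ≥0∞) := by
  unfold ind
  rw [← Finset.sum_boole]
  apply Finset.sum_congr rfl
  intro y _
  congr

lemma unmatched_bound {P : Measure (Config d)} (hP : IsBernoulliHalfProduct P) (H : GoodRel rel)
    (k s : ℕ) (hfin : ∀ᵐ γ ∂P, {y | rel γ k 0 y}.Finite) (B : Finset (Site d)) (hB : B.Nonempty)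
    (hBs : ∀ b ∈ B, inB s b) :
    P {γ | phi rel γ (k + 1) 0 = 0} ≤
      ENNReal.ofReal (1 / Real.sqrt B.card) + 2 * P {γ | cut rel k s γ 0} := by
  classical
  have hsum_meas : ∀ x : Site d, Measurable fun γ : Config d =>
      ENNReal.ofReal (|∑ b ∈ B, sg γ (x + b)| / B.card) := by
    intro x
    apply Measurable.ennreal_ofReal
    apply Measurable.div_const
    have h1 : Measurable fun γ : Config d => ∑ b ∈ B, sg γ (x + b) :=
      Finset.measurable_fun_sum _ fun b _ => sg_meas (x + b)
    exact continuous_abs.measurable.comp h1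
  have hT := transport_le hP H k hfin (fun γ x => ind (phi rel γ (k + 1) x = x))
    (fun γ x => ENNReal.ofReal (|∑ b ∈ B, sg γ (x + b)| / B.card) + 2 * ind (cut rel k s γ x))
    (fun x => measurable_ind (phi_meas H (k + 1) x x))
    (fun x => (hsum_meas x).add ((measurable_ind (cut_meas H k s x)).const_mul 2))
    ?_ ?_ ?_
  · rw [lintegral_ind (phi_meas H (k + 1) 0 0)] at hT
    refine hT.trans ?_
    rw [lintegral_add_left (hsum_meas 0),
      lintegral_const_mul _ (measurable_ind (cut_meas H k s 0)), lintegral_ind (cut_meas H k s 0)]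
    gcongr
    simp only [zero_add]
    exact first_moment hP B hB
  · intro γ x z
    congr 1
    rw [phi_shift H]
    exact propext (add_left_inj z)
  · intro γ x z
    have e1 : ∀ b, sg (shiftCfg z γ) (x + z + b) = sg γ (x + b) := by
      intro b
      unfold sg pm1
      rw [add_right_comm, shiftCfg_add]
    have e2 : cut rel k s (shiftCfg z γ) (x + z) ↔ cut rel k s γ x := by
      unfold cut
      apply exists_congr
      intro v
      rw [add_right_comm, H.shift]
    simp only [e1, e2]
  · intro γ L hL
    have h1 := phi_count H γ k 0 L hL
    set D := L.filter (fun x => cut rel k s γ x) with hD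
    have h2 := det_ineq L D B (sg γ) (sg_abs γ) hB ?_
    · have h3 : ((L.filter (fun y => phi rel γ (k + 1) y = y)).card : ℝ) ≤ |∑ x ∈ L, sg γ x| := by
        have : ((L.filter (fun y => phi rel γ (k + 1) y = y)).card : ℝ) ≤
            ((|∑ y ∈ L, pm1 γ y| : ℤ) : ℝ) := by exact_mod_cast h1
        refine this.trans (le_of_eq ?_)
        unfold sg
        push_cast
        rfl
      have h4 := h3.trans h2
      have e1 : ∑ y ∈ L, ind (phi rel γ (k + 1) y = y) =
          ((L.filter (fun y => phi rel γ (k + 1) y = y)).card : ℝ≥0∞) := by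
        exact sum_ind L _
      have e2 : ∑ y ∈ L, ind (cut rel k s γ y) = (D.card : ℝ≥0∞) := by
        exact sum_ind L _
      rw [e1, Finset.sum_add_distrib, ← Finset.mul_sum, e2,
        ← ENNReal.ofReal_sum_of_nonneg (fun _ _ => by positivity)]
      have := ENNReal.ofReal_le_ofReal h4
      rw [ENNReal.ofReal_add (by positivity) (by positivity), ENNReal.ofReal_mul (by norm_num)]
        at this
      simpa using this
    · intro x hx hxD b hb
      have hnc : ¬ cut rel k s γ x := fun h => hxD (Finset.mem_filter.2 ⟨hx, h⟩)
      unfold cut at hnc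
      push Not at hnc
      refine ⟨(hL _).2 (H.trans ((hL x).1 hx) (hnc b (hBs b hb))), ?_⟩
      rw [sub_eq_add_neg]
      refine (hL _).2 (H.trans ((hL x).1 hx) (hnc (-b) ?_))
      intro i
      rw [Pi.neg_apply, abs_neg]
      exact hBs b hb i

end Unmatched

section Partition

variable {d : ℕ}

/-- A seed of length `m`: a run of `m` zeros in direction `e₁` starting at `z`. -/
def seedz (γ : Config d) (m : ℕ) (z : Site d) : Prop :=
  ∀ n < m, γ (z + (n : ℤ) • e1 d) = false

/-- Length of the seeds of level `j`. -/
def mm (d j : ℕ) : ℕ := d * j - (2 * Nat.log 2 j + 2 * d)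

/-- The nested equivalence relations: `x` and `y` are in the same level-`k` cell if no cube of
radius `2^j`, `j ≥ k`, centred at a level-`j` seed separates them. -/
def relQ (γ : Config d) (k : ℕ) (x y : Site d) : Prop :=
  ∀ j, k ≤ j → ∀ z, seedz γ (mm d j) z → (inB (2 ^ j) (x - z) ↔ inB (2 ^ j) (y - z))

lemma seedz_meas (m : ℕ) (z : Site d) : MeasurableSet {γ | seedz γ m z} := by
  have : {γ | seedz γ m z} = ⋂ n, ⋂ (_ : n < m),
      (fun γ : Config d => γ (z + (n : ℤ) • e1 d)) ⁻¹' {false} := by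
    ext γ; simp [seedz]
  rw [this]
  exact MeasurableSet.iInter fun n => MeasurableSet.iInter fun _ =>
    (measurable_pi_apply (z + (n : ℤ) • e1 d)) (MeasurableSet.singleton _)

lemma seedz_shift (γ : Config d) (m : ℕ) (z w : Site d) :
    seedz (shiftCfg w γ) m (z + w) ↔ seedz γ m z := by
  unfold seedz
  refine forall_congr' fun n => imp_congr_right fun _ => ?_
  rw [add_right_comm, shiftCfg_add]

lemma relQ_good : GoodRel (relQ (d := d)) where
  refl := fun γ k x j _ z _ => Iff.rfl
  symm := fun h j hj z hz => (h j hj z hz).symm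
  trans := fun h h' j hj z hz => (h j hj z hz).trans (h' j hj z hz)
  mono := fun h j hj z hz => h j (by omega) z hz
  meas := by
    intro k x y
    have : {γ : Config d | relQ γ k x y} = ⋂ j, ⋂ (_ : k ≤ j), ⋂ z : Site d,
        ({γ : Config d | seedz γ (mm d j) z}ᶜ ∪
          {_γ | inB (2 ^ j) (x - z) ↔ inB (2 ^ j) (y - z)}) := by
      ext γ
      simp only [relQ, Set.mem_ofPred_eq, Set.mem_iInter, Set.mem_union, Set.mem_compl_iff]
      refine forall_congr' fun j => forall_congr' fun _ => forall_congr' fun z => ?_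
      exact imp_iff_not_or
    rw [this]
    exact MeasurableSet.iInter fun j => MeasurableSet.iInter fun _ => MeasurableSet.iInter fun z =>
      (seedz_meas _ z).compl.union (MeasurableSet.const _)
  shift := by
    intro γ k x y w
    unfold relQ
    refine forall_congr' fun j => forall_congr' fun _ => ?_
    constructor
    · intro h z hz
      have := h (z + w) ((seedz_shift γ _ z w).2 hz)
      rwa [add_sub_add_right_eq_sub, add_sub_add_right_eq_sub] at this
    · intro h z hz
      have := h (z - w) ((seedz_shift γ _ (z - w) w).1 (by rwa [sub_add_cancel]))
      rwa [sub_sub_eq_add_sub, sub_sub_eq_add_sub] at this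

open Classical in
/-- The sites of the block of a seed. -/
def blockF (m : ℕ) (z : Site d) : Finset (Site d) :=
  (Finset.range m).image fun n : ℕ => z + (n : ℤ) • e1 d

lemma blockF_apply (hd : 1 ≤ d) (z : Site d) (n : ℕ) :
    (z + (n : ℤ) • e1 d) ⟨0, hd⟩ = z ⟨0, hd⟩ + n := by
  simp [e1]

lemma blockF_card (hd : 1 ≤ d) (m : ℕ) (z : Site d) : (blockF m z).card = m := by
  unfold blockF
  rw [Finset.card_image_of_injective, Finset.card_range]
  intro a b h
  have := congrFun h ⟨0, hd⟩
  simp only [blockF_apply] at this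
  omega

lemma seedz_eq (m : ℕ) (z : Site d) :
    {γ : Config d | seedz γ m z} = {γ | ∀ x ∈ blockF m z, γ x = false} := by
  ext γ
  simp [seedz, blockF]

lemma seedz_prob (hd : 1 ≤ d) {P : Measure (Config d)} (hP : IsBernoulliHalfProduct P)
    (m : ℕ) (z : Site d) : P {γ | seedz γ m z} = (1 / 2 : ℝ≥0∞) ^ m := by
  rw [seedz_eq, hP.2 (blockF m z) (fun _ => false), blockF_card hd]

/-- Base points of pairwise disjoint blocks of length `m`. -/
def pos (m : ℕ) (t : Site d) : Site d := fun i => if (i : ℕ) = 0 then m * t i else t i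

open Classical in
lemma blocks_disj (hd : 1 ≤ d) (m : ℕ) {t u : Site d} (h : t ≠ u) :
    Disjoint (blockF m (pos m t)) (blockF m (pos m u)) := by
  rw [Finset.disjoint_left]
  intro x hx hy
  apply h
  obtain ⟨a, ha, rfl⟩ := Finset.mem_image.1 hx
  obtain ⟨b, hb, hab⟩ := Finset.mem_image.1 hy
  rw [Finset.mem_range] at ha hb
  ext i
  have hi := congrFun hab i
  simp only [pos, e1, Pi.add_apply, Pi.smul_apply, smul_eq_mul] at hi
  by_cases h0 : (i : ℕ) = 0
  · simp only [h0, if_true, mul_one] at hi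
    have hm : (0 : ℤ) < m := by omega
    have h1 : ((m : ℤ) * t i + a) / m = t i := by
      rw [Int.mul_add_ediv_left _ _ hm.ne', Int.ediv_eq_zero_of_lt (by omega) (by omega)]; simp
    have h2 : ((m : ℤ) * u i + b) / m = u i := by
      rw [Int.mul_add_ediv_left _ _ hm.ne', Int.ediv_eq_zero_of_lt (by omega) (by omega)]; simp
    rw [← h1, ← h2, hi]
  · simp only [h0, if_false, mul_zero, add_zero] at hi
    exact hi.symm

open Classical in
lemma no_seed_prob (hd : 1 ≤ d) {P : Measure (Config d)} (hP : IsBernoulliHalfProduct P)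
    (m : ℕ) (T : Finset (Site d)) :
    P {γ | ∀ t ∈ T, ¬ seedz γ m (pos m t)} = (1 - (1 / 2 : ℝ≥0∞) ^ m) ^ T.card := by
  have := hP.1
  have hI : ProbabilityTheory.iIndepSet (fun t : Site d => {γ : Config d | seedz γ m (pos m t)}) P := by
    rw [ProbabilityTheory.iIndepSet_iff_meas_biInter (fun t => seedz_meas m (pos m t))]
    intro s
    have e : (⋂ i ∈ s, {γ : Config d | seedz γ m (pos m i)}) =
        {γ | ∀ x ∈ s.biUnion (fun t => blockF m (pos m t)), γ x = false} := by
      ext γ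
      simp only [seedz_eq, Set.mem_iInter, Set.mem_ofPred_eq, Finset.mem_biUnion]
      constructor
      · rintro h x ⟨t, ht, hx⟩; exact h t ht x hx
      · intro h t ht x hx; exact h x ⟨t, ht, hx⟩
    rw [e, hP.2 _ (fun _ => false), Finset.card_biUnion (fun t _ u _ h => blocks_disj hd m h)]
    simp only [blockF_card hd, seedz_prob hd hP, Finset.sum_const, Finset.prod_const, smul_eq_mul]
    rw [mul_comm, pow_mul]
  have h2 := ProbabilityTheory.iIndep.meas_biInter (S := T)
    (s := fun t : Site d => {γ : Config d | seedz γ m (pos m t)}ᶜ) hI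
    (fun t _ => MeasurableSet.compl (MeasurableSpace.measurableSet_generateFrom rfl))
  have e2 : {γ : Config d | ∀ t ∈ T, ¬ seedz γ m (pos m t)} =
      ⋂ t ∈ T, {γ : Config d | seedz γ m (pos m t)}ᶜ := by
    ext γ; simp
  rw [e2, h2, Finset.prod_congr rfl (g := fun _ => 1 - (1 / 2 : ℝ≥0∞) ^ m)]
  · simp
  · intro t _
    rw [prob_compl_eq_one_sub (seedz_meas m _), seedz_prob hd hP]

/-- There is no level-`j` seed within distance `2^j` of the origin. -/
def badj (γ : Config d) (j : ℕ) : Prop := ∀ z, inB (2 ^ j) z → ¬ seedz γ (mm d j) z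

lemma log_bound {j : ℕ} (hj : 16 ≤ j) : 4 * Nat.log 2 j ≤ j := by
  have h : ∀ a, 4 ≤ a → 4 * a + 3 < 2 ^ (a + 1) := by
    intro a ha
    induction a, ha using Nat.le_induction with
    | base => norm_num
    | succ a _ ih => rw [pow_succ]; omega
  have h1 : Nat.log 2 j < j / 4 + 1 := by
    apply Nat.log_lt_of_lt_pow (by omega)
    have := h (j / 4) (by omega)
    omega
  omega

lemma mm_eq {j : ℕ} (hd : 1 ≤ d) (hj : 16 ≤ j) :
    mm d j + (2 * Nat.log 2 j + 2 * d) = d * j ∧ 1 ≤ mm d j := by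
  have := log_bound hj
  unfold mm
  have h1 : d * j ≥ d * 16 := Nat.mul_le_mul_left d hj
  have h2 : d * j ≥ j := Nat.le_mul_of_pos_left j hd
  omega

open Classical in
lemma bad_prob (hd : 1 ≤ d) {P : Measure (Config d)} (hP : IsBernoulliHalfProduct P)
    {j : ℕ} (hj : 16 ≤ j) : P {γ | badj γ j} ≤ ENNReal.ofReal ((1 / 2 : ℝ) ^ j) := by
  obtain ⟨hm, hm1⟩ := mm_eq hd hj
  set m := mm d j with hmdef
  set R : ℕ := 2 ^ j with hR
  set q : ℕ := R / m with hq
  set T : Finset (Site d) := Fintype.piFinset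
    (fun i : Fin d => if (i : ℕ) = 0 then Finset.Icc (-(q : ℤ)) q else Finset.Icc (-(R : ℤ)) R)
    with hT
  have hsub : {γ : Config d | badj γ j} ⊆ {γ | ∀ t ∈ T, ¬ seedz γ m (pos m t)} := by
    intro γ h t ht
    apply h
    intro i
    rw [hT, Fintype.mem_piFinset] at ht
    have hi := ht i
    unfold pos
    by_cases h0 : (i : ℕ) = 0
    · simp only [h0, if_true, Finset.mem_Icc] at hi ⊢
      rw [abs_mul, Nat.abs_cast]
      have h1 : |t i| ≤ (q : ℤ) := abs_le.2 hi
      have h2 : (m : ℤ) * q ≤ R := by exact_mod_cast Nat.mul_div_le R m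
      exact (mul_le_mul_of_nonneg_left h1 (by omega)).trans h2
    · simp only [h0, if_false, Finset.mem_Icc] at hi ⊢
      exact abs_le.2 hi
  have hcard : R ^ d ≤ m * T.card := by
    rw [hT, Fintype.card_piFinset]
    obtain ⟨e, rfl⟩ : ∃ e, d = e + 1 := ⟨d - 1, by omega⟩
    rw [Fin.prod_univ_succ]
    simp only [Fin.val_zero, if_true, Fin.val_succ, Nat.add_eq_zero_iff, one_ne_zero, and_false,
      if_false, Int.card_Icc, Finset.prod_const, Finset.card_univ, Fintype.card_fin]
    rw [← mul_assoc, pow_succ, mul_comm]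
    apply Nat.mul_le_mul
    · have h1 : R < m * (q + 1) := by
        rw [mul_comm]; exact Nat.lt_mul_of_div_lt (Nat.lt_succ_self _) (by omega)
      have h2 : q + 1 ≤ ((q : ℤ) + 1 - -(q : ℤ)).toNat := by omega
      exact h1.le.trans (Nat.mul_le_mul_left m h2)
    · apply Nat.pow_le_pow_left
      omega
  refine (measure_mono hsub).trans ?_
  rw [no_seed_prob hd hP]
  have hr : (1 - (1 / 2 : ℝ≥0∞) ^ m) ^ T.card = ENNReal.ofReal ((1 - (1 / 2 : ℝ) ^ m) ^ T.card) := by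
    have h1 : (0 : ℝ) ≤ 1 - (1 / 2 : ℝ) ^ m := by
      have : (1 / 2 : ℝ) ^ m ≤ 1 := pow_le_one₀ (by norm_num) (by norm_num)
      linarith
    rw [ENNReal.ofReal_pow h1, ENNReal.ofReal_sub _ (by positivity), ENNReal.ofReal_one,
      ENNReal.ofReal_pow (by norm_num), ENNReal.ofReal_div_of_pos (by norm_num)]
    simp
  rw [hr]
  apply ENNReal.ofReal_le_ofReal
  -- the main numerical estimate
  have hj2 : j * j ≤ 4 * 2 ^ (2 * Nat.log 2 j) := by
    have h1 : j < 2 ^ (Nat.log 2 j + 1) := Nat.lt_pow_succ_log_self (by norm_num) j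
    have h2 : j * j ≤ 2 ^ (Nat.log 2 j + 1) * 2 ^ (Nat.log 2 j + 1) := Nat.mul_le_mul h1.le h1.le
    refine h2.trans (le_of_eq ?_)
    ring
  have hd4 : ∀ d : ℕ, 1 ≤ d → 4 * d ≤ 2 ^ (2 * d) := by
    intro d hd
    induction d, hd using Nat.le_induction with
    | base => norm_num
    | succ a _ ih =>
      have : 2 ^ (2 * (a + 1)) = 4 * 2 ^ (2 * a) := by ring
      omega
  have hkey : j * 2 ^ m ≤ T.card := by
    have h1 : R ^ d = 2 ^ m * 2 ^ (2 * Nat.log 2 j) * 2 ^ (2 * d) := by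
      rw [hR, ← pow_mul, mul_comm j d, ← hm]; ring
    have h2 : m ≤ d * j := by omega
    have h3 : R ^ d ≤ d * j * T.card := hcard.trans (Nat.mul_le_mul_right _ h2)
    have h4 : (4 * d * j) * (j * 2 ^ m) ≤ (4 * d * j) * T.card := by
      calc (4 * d * j) * (j * 2 ^ m) = 4 * d * (j * j) * 2 ^ m := by ring
        _ ≤ 2 ^ (2 * d) * (4 * 2 ^ (2 * Nat.log 2 j)) * 2 ^ m := by
          gcongr
          exact hd4 d hd
        _ = 4 * R ^ d := by rw [h1]; ring
        _ ≤ 4 * (d * j * T.card) := by gcongr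
        _ = (4 * d * j) * T.card := by ring
    exact Nat.le_of_mul_le_mul_left h4 (by positivity)
  have hkey' : (j : ℝ) ≤ T.card * (1 / 2 : ℝ) ^ m := by
    rw [one_div, inv_pow, ← div_eq_mul_inv, le_div_iff₀ (by positivity)]
    exact_mod_cast hkey
  have h1 : 1 - (1 / 2 : ℝ) ^ m ≤ Real.exp (-((1 / 2 : ℝ) ^ m)) := by
    have := Real.add_one_le_exp (-((1 / 2 : ℝ) ^ m)); linarith
  have h0 : (0 : ℝ) ≤ 1 - (1 / 2 : ℝ) ^ m := by
    have : (1 / 2 : ℝ) ^ m ≤ 1 := pow_le_one₀ (by norm_num) (by norm_num)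
    linarith
  calc (1 - (1 / 2 : ℝ) ^ m) ^ T.card ≤ (Real.exp (-((1 / 2 : ℝ) ^ m))) ^ T.card := by gcongr
    _ = Real.exp (-(T.card * (1 / 2 : ℝ) ^ m)) := by
        rw [← Real.exp_nat_mul]; ring_nf
    _ ≤ Real.exp (-(j : ℝ)) := by
        apply Real.exp_le_exp.2; linarith
    _ = (Real.exp (-1)) ^ j := by rw [← Real.exp_nat_mul]; ring_nf
    _ ≤ (1 / 2 : ℝ) ^ j := by
        gcongr
        rw [Real.exp_neg, one_div]
        apply inv_anti₀ (by norm_num)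
        have := Real.add_one_le_exp (1 : ℝ)
        linarith

lemma relQ_ball {γ : Config d} {k : ℕ} (h : ¬ badj γ k) {y : Site d} (hy : relQ γ k 0 y) :
    inB (2 ^ (k + 1)) y := by
  unfold badj at h
  push Not at h
  obtain ⟨z, hz, hs⟩ := h
  have h1 : inB (2 ^ k) (0 - z) := by
    intro i
    have := hz i
    simpa using this
  have h2 := (hy k le_rfl z hs).1 h1
  intro i
  have a := hz i
  have b := h2 i
  rw [Pi.sub_apply] at b
  have : |y i| ≤ |y i - z i| + |z i| := by
    have := abs_add_le (y i - z i) (z i)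
    rwa [sub_add_cancel] at this
  push_cast at a b ⊢
  rw [pow_succ]
  linarith

lemma inB_finite (R : ℕ) : {y : Site d | inB R y}.Finite := by
  apply (Fintype.piFinset (fun _ : Fin d => Finset.Icc (-(R : ℤ)) R)).finite_toSet.subset
  intro y hy
  rw [Finset.mem_coe, Fintype.mem_piFinset]
  intro i
  rw [Finset.mem_Icc]
  exact abs_le.1 (hy i)

lemma badj_meas (j : ℕ) : MeasurableSet {γ : Config d | badj γ j} := by
  have : {γ : Config d | badj γ j} = ⋂ z, ⋂ (_ : inB (2 ^ j) z), {γ | seedz γ (mm d j) z}ᶜ := by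
    ext γ; simp [badj]
  rw [this]
  exact MeasurableSet.iInter fun z => MeasurableSet.iInter fun _ => (seedz_meas _ z).compl

lemma relQ_le {γ : Config d} {k j : ℕ} (hkj : k ≤ j) {x y : Site d} (h : relQ γ k x y) :
    relQ γ j x y := fun i hi z hz => h i (hkj.trans hi) z hz

lemma cell_finite (hd : 1 ≤ d) {P : Measure (Config d)} (hP : IsBernoulliHalfProduct P) (k : ℕ) :
    ∀ᵐ γ ∂P, {y | relQ γ k 0 y}.Finite := by
  rw [ae_iff]
  have hle : ∀ n : ℕ, P {γ : Config d | ¬ {y | relQ γ k 0 y}.Finite} ≤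
      ENNReal.ofReal ((1 / 2 : ℝ) ^ (n + (k + 16))) := by
    intro n
    refine le_trans (measure_mono ?_) (bad_prob hd hP (j := n + (k + 16)) (by omega))
    intro γ hγ
    by_contra hb
    apply hγ
    apply (inB_finite (2 ^ (n + (k + 16) + 1))).subset
    intro y hy
    exact relQ_ball hb (relQ_le (by omega) hy)
  have hlim : Filter.Tendsto (fun n : ℕ => ENNReal.ofReal ((1 / 2 : ℝ) ^ (n + (k + 16))))
      Filter.atTop (nhds 0) := by
    rw [← ENNReal.ofReal_zero]
    apply ENNReal.tendsto_ofReal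
    exact (_root_.tendsto_pow_atTop_nhds_zero_of_lt_one (by norm_num) (by norm_num)).comp
      (Filter.tendsto_add_atTop_nat _)
  exact le_antisymm (ge_of_tendsto' hlim hle) bot_le

end Partition

section CutBound

variable {d : ℕ}

/-- The lattice cube of radius `R`. -/
def ballF (d R : ℕ) : Finset (Site d) := Fintype.piFinset (fun _ : Fin d => Finset.Icc (-(R : ℤ)) R)

lemma mem_ballF {R : ℕ} {v : Site d} : v ∈ ballF d R ↔ inB R v := by
  simp only [ballF, Fintype.mem_piFinset, Finset.mem_Icc, inB, abs_le]

lemma card_ballF (R : ℕ) : (ballF d R).card = (2 * R + 1) ^ d := by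
  rw [ballF, Fintype.card_piFinset]
  simp only [Int.card_Icc, Finset.prod_const, Finset.card_univ, Fintype.card_fin]
  congr 1
  omega

lemma pow_diff {a b : ℝ} (hb : 0 ≤ b) (hab : b ≤ a) (n : ℕ) :
    a ^ (n + 1) - b ^ (n + 1) ≤ (n + 1) * a ^ n * (a - b) := by
  induction n with
  | zero => simp
  | succ n ih =>
    have h1 : a ^ (n + 1 + 1) - b ^ (n + 1 + 1) =
        a * (a ^ (n + 1) - b ^ (n + 1)) + b ^ (n + 1) * (a - b) := by ring
    have h2 : b ^ (n + 1) ≤ a ^ (n + 1) := by gcongr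
    have h3 : b ^ (n + 1) * (a - b) ≤ a ^ (n + 1) * (a - b) :=
      mul_le_mul_of_nonneg_right h2 (by linarith)
    have h4 := mul_le_mul_of_nonneg_left ih (hb.trans hab)
    rw [h1]
    push_cast
    calc _ ≤ a * ((n + 1) * a ^ n * (a - b)) + a ^ (n + 1) * (a - b) := add_le_add h4 h3
      _ = _ := by ring

/-- The constant of the annulus bound. -/
def KK (d : ℕ) : ℝ := 4 * d * 5 ^ (d - 1) * 4 ^ d

open Classical in
lemma annulus_bound (hd : 1 ≤ d) {j s : ℕ} (hj : 1 ≤ j) (hs : s ≤ 2 ^ j) :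
    ((ballF d (2 ^ j + s) \ ballF d (2 ^ j - s)).card : ℝ) * (1 / 2 : ℝ) ^ (mm d j) ≤
      KK d * s * ((j : ℝ) ^ 2 / 2 ^ j) := by
  have hsub : ballF d (2 ^ j - s) ⊆ ballF d (2 ^ j + s) := by
    intro v hv
    rw [mem_ballF] at hv ⊢
    intro i
    have := hv i
    have h2 : ((2 ^ j - s : ℕ) : ℤ) ≤ ((2 ^ j + s : ℕ) : ℤ) := by
      exact_mod_cast (Nat.sub_le _ _).trans (Nat.le_add_right _ _)
    exact this.trans h2
  have hcard : ((ballF d (2 ^ j + s) \ ballF d (2 ^ j - s)).card : ℝ) ≤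
      d * (5 * 2 ^ j) ^ (d - 1) * (4 * s) := by
    rw [Finset.card_sdiff_of_subset hsub, Nat.cast_sub (Finset.card_le_card hsub), card_ballF,
      card_ballF]
    obtain ⟨e, rfl⟩ : ∃ e, d = e + 1 := ⟨d - 1, by omega⟩
    push_cast [Nat.cast_sub hs]
    have hs' : (s : ℝ) ≤ 2 ^ j := by exact_mod_cast hs
    have h1 : (1 : ℝ) ≤ 2 ^ j := one_le_pow₀ (by norm_num)
    have h2 : (2 : ℝ) ≤ 2 ^ j := by
      calc (2 : ℝ) = 2 ^ 1 := by norm_num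
        _ ≤ 2 ^ j := pow_le_pow_right₀ (by norm_num) hj
    refine (pow_diff (by linarith) (by have : (0 : ℝ) ≤ s := by positivity
                                       linarith) e).trans ?_
    have h3 : 2 * ((2 : ℝ) ^ j + s) + 1 ≤ 5 * 2 ^ j := by linarith
    have h4 : 2 * ((2 : ℝ) ^ j + s) + 1 - (2 * (2 ^ j - s) + 1) = 4 * s := by ring
    rw [h4]
    gcongr
  have hpow : ((2 : ℝ) ^ j) ^ d ≤ 2 ^ mm d j * ((j : ℝ) ^ 2) * 4 ^ d := by
    have h1 : 2 ^ Nat.log 2 j ≤ j := Nat.pow_log_le_self 2 (by omega)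
    have h2 : (2 ^ j) ^ d ≤ 2 ^ mm d j * (j ^ 2) * 4 ^ d := by
      calc (2 ^ j) ^ d = 2 ^ (d * j) := by rw [← pow_mul, mul_comm]
        _ ≤ 2 ^ (mm d j + (2 * Nat.log 2 j + 2 * d)) := by
            apply Nat.pow_le_pow_right (by norm_num)
            unfold mm; omega
        _ = 2 ^ mm d j * (2 ^ Nat.log 2 j) ^ 2 * 4 ^ d := by
            rw [show (4 : ℕ) = 2 ^ 2 by norm_num, ← pow_mul 2 2 d]; ring
        _ ≤ _ := by gcongr
    exact_mod_cast h2
  have hdp : ((2 : ℝ) ^ j) ^ d = ((2 : ℝ) ^ j) ^ (d - 1) * 2 ^ j := by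
    rw [← pow_succ]; congr 1; omega
  calc _ ≤ (d * (5 * 2 ^ j) ^ (d - 1) * (4 * s)) * (1 / 2 : ℝ) ^ (mm d j) := by gcongr
    _ = (4 * d * 5 ^ (d - 1) * s) * (((2 : ℝ) ^ j) ^ d / (2 ^ mm d j * 2 ^ j)) := by
        rw [hdp, mul_pow, one_div_pow]; field_simp
    _ ≤ (4 * d * 5 ^ (d - 1) * s) * ((2 ^ mm d j * ((j : ℝ) ^ 2) * 4 ^ d) / (2 ^ mm d j * 2 ^ j)) := by
        gcongr
    _ = _ := by unfold KK; field_simp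

open Classical in
lemma cut_subset {k s : ℕ} (hs : s ≤ 2 ^ k) : {γ : Config d | cut relQ k s γ 0} ⊆
    ⋃ i : ℕ, ⋃ z ∈ ballF d (2 ^ (k + i) + s) \ ballF d (2 ^ (k + i) - s),
      {γ | seedz γ (mm d (k + i)) z} := by
  rintro γ ⟨v, hv, h⟩
  unfold relQ at h
  push Not at h
  obtain ⟨j, hj, z, hz, hne⟩ := h
  obtain ⟨i, rfl⟩ := Nat.exists_eq_add_of_le hj
  have hs' : s ≤ 2 ^ (k + i) := hs.trans (Nat.pow_le_pow_right (by norm_num) hj)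
  rw [zero_add] at hne
  simp only [Set.mem_iUnion]
  refine ⟨i, z, ?_, hz⟩
  rw [Finset.mem_sdiff, mem_ballF, mem_ballF]
  set R := 2 ^ (k + i) with hR
  unfold inB at *
  simp only [Pi.sub_apply, Pi.zero_apply, zero_sub, abs_neg] at hne
  push_cast [Nat.cast_sub hs']
  push Not at hne
  rcases hne with ⟨h1, t, h2⟩ | ⟨⟨t, h1⟩, h2⟩
  · refine ⟨fun i => ?_, fun h3 => ?_⟩
    · have := h1 i; omega
    · have a := h3 t
      have b := hv t
      rw [abs_le] at a b
      rw [lt_abs] at h2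
      omega
  · refine ⟨fun i => ?_, fun h3 => ?_⟩
    · have a := h2 i
      have b := hv i
      rw [abs_le] at *
      omega
    · have := h3 t; omega

/-- The constant of the series. -/
def SS : ℝ := ∑' i : ℕ, (1 + (i : ℝ)) ^ 2 * (1 / 2) ^ i

lemma SS_summable : Summable fun i : ℕ => (1 + (i : ℝ)) ^ 2 * (1 / 2 : ℝ) ^ i := by
  have h := summable_pow_mul_geometric_of_norm_lt_one (R := ℝ) 2 (r := 1 / 2) (by norm_num)
  have h1 := (summable_nat_add_iff 1).2 h
  have h2 := h1.mul_left 2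
  refine h2.congr fun i => ?_
  push_cast
  ring

lemma SS_nonneg : 0 ≤ SS := tsum_nonneg fun i => by positivity

lemma KK_nonneg : 0 ≤ KK d := by unfold KK; positivity

open Classical in
lemma cut_bound (hd : 1 ≤ d) {P : Measure (Config d)} (hP : IsBernoulliHalfProduct P)
    {k s : ℕ} (hk : 1 ≤ k) (hs : s ≤ 2 ^ k) :
    P {γ | cut relQ k s γ 0} ≤ ENNReal.ofReal (KK d * SS * s * ((k : ℝ) ^ 2 / 2 ^ k)) := by
  have hKK := KK_nonneg (d := d)
  have hterm : ∀ i : ℕ, P (⋃ z ∈ ballF d (2 ^ (k + i) + s) \ ballF d (2 ^ (k + i) - s),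
      {γ | seedz γ (mm d (k + i)) z}) ≤
      ENNReal.ofReal ((KK d * s * ((k : ℝ) ^ 2 / 2 ^ k)) * ((1 + (i : ℝ)) ^ 2 * (1 / 2) ^ i)) := by
    intro i
    refine (measure_biUnion_finset_le _ _).trans ?_
    simp only [seedz_prob hd hP, Finset.sum_const, nsmul_eq_mul]
    have e : (((ballF d (2 ^ (k + i) + s) \ ballF d (2 ^ (k + i) - s)).card : ℕ) : ℝ≥0∞) *
        (1 / 2 : ℝ≥0∞) ^ mm d (k + i) = ENNReal.ofReal
        (((ballF d (2 ^ (k + i) + s) \ ballF d (2 ^ (k + i) - s)).card : ℝ) *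
          (1 / 2 : ℝ) ^ mm d (k + i)) := by
      rw [ENNReal.ofReal_mul (by positivity), ENNReal.ofReal_natCast,
        ENNReal.ofReal_pow (by norm_num), ENNReal.ofReal_div_of_pos (by norm_num)]
      simp
    rw [e]
    apply ENNReal.ofReal_le_ofReal
    refine (annulus_bound hd (j := k + i) (by omega)
      (hs.trans (Nat.pow_le_pow_right (by norm_num) (by omega)))).trans ?_
    have hk' : (1 : ℝ) ≤ k := by exact_mod_cast hk
    have h1 : (((k + i : ℕ) : ℝ)) ≤ k * (1 + i) := by
      push_cast
      have : (i : ℝ) ≤ k * i := le_mul_of_one_le_left (by positivity) hk'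
      linarith
    calc _ ≤ KK d * s * ((k * (1 + i) : ℝ) ^ 2 / 2 ^ (k + i)) := by gcongr
      _ = _ := by rw [pow_add, one_div_pow]; field_simp
  refine (measure_mono (cut_subset hs)).trans ((measure_iUnion_le _).trans ?_)
  refine (ENNReal.tsum_le_tsum hterm).trans ?_
  rw [← ENNReal.ofReal_tsum_of_nonneg (fun i => by positivity) (SS_summable.mul_left _),
    tsum_mul_left]
  apply ENNReal.ofReal_le_ofReal
  apply le_of_eq
  unfold SS
  ring

end CutBound

section Final

variable {d : ℕ}

/-- The exponent. -/
def bet (d : ℕ) : ℝ := (d : ℝ) / ((d : ℝ) + 2)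

/-- The decay rate per level. -/
def qq (d : ℕ) : ℝ := (2 : ℝ) ^ (-bet d)

/-- The level constant. -/
def CC (d : ℕ) : ℝ := 1 + 4 * (KK d * SS)

lemma bet_pos (hd : 1 ≤ d) : 0 < bet d := by
  have : (1 : ℝ) ≤ d := by exact_mod_cast hd
  unfold bet; positivity

lemma bet_le_one : bet d ≤ 1 := by
  unfold bet
  rw [div_le_one (by positivity)]
  linarith

lemma qq_pos : 0 < qq d := Real.rpow_pos_of_pos (by norm_num) _

lemma qq_lt_one (hd : 1 ≤ d) : qq d < 1 :=
  Real.rpow_lt_one_of_one_lt_of_neg (by norm_num) (by linarith [bet_pos hd])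

lemma qq_pow (k : ℕ) : qq d ^ k = (2 : ℝ) ^ (-(k * bet d)) := by
  unfold qq
  rw [← Real.rpow_natCast, ← Real.rpow_mul (by norm_num)]
  ring_nf

lemma CC_pos : 0 < CC d := by
  have := mul_nonneg (KK_nonneg (d := d)) SS_nonneg
  unfold CC; linarith

lemma level_bound (hd : 1 ≤ d) {P : Measure (Config d)} (hP : IsBernoulliHalfProduct P)
    {k : ℕ} (hk : 1 ≤ k) :
    P {γ | phi relQ γ (k + 1) 0 = 0} ≤ ENNReal.ofReal (CC d * ((k : ℝ) ^ 2 * qq d ^ k)) := by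
  have hKS := mul_nonneg (KK_nonneg (d := d)) SS_nonneg
  set b : ℝ := (2 : ℝ) ^ (2 * (k : ℝ) / ((d : ℝ) + 2)) with hb
  set s : ℕ := ⌈b⌉₊ with hs
  have hb1 : 1 ≤ b := Real.one_le_rpow (by norm_num) (by positivity)
  have hbs : b ≤ s := Nat.le_ceil b
  have hs2 : (s : ℝ) ≤ 2 * b := by
    have := Nat.ceil_lt_add_one (show 0 ≤ b by linarith)
    linarith
  have hs1 : 1 ≤ s := by
    have : (1 : ℝ) ≤ s := hb1.trans hbs
    exact_mod_cast this
  have hsk : s ≤ 2 ^ k := by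
    rw [hs, Nat.ceil_le]
    push_cast
    rw [← Real.rpow_natCast]
    apply Real.rpow_le_rpow_of_exponent_le (by norm_num)
    rw [div_le_iff₀ (by positivity)]
    have : (0 : ℝ) ≤ (k : ℝ) * d := by positivity
    linarith
  set B : Finset (Site d) := Fintype.piFinset (fun _ : Fin d => Finset.Ico (0 : ℤ) s) with hB
  have hBcard : B.card = s ^ d := by
    rw [hB, Fintype.card_piFinset]
    simp
  have hBne : B.Nonempty := by
    rw [← Finset.card_pos, hBcard]; positivity
  have hBs : ∀ b ∈ B, inB s b := by
    intro b hb i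
    rw [hB, Fintype.mem_piFinset] at hb
    have := Finset.mem_Ico.1 (hb i)
    rw [abs_le]; omega
  refine (unmatched_bound hP relQ_good k s (cell_finite hd hP k) B hBne hBs).trans ?_
  have hcut := cut_bound hd hP hk hsk
  have hk' : (1 : ℝ) ≤ (k : ℝ) ^ 2 := one_le_pow₀ (by exact_mod_cast hk)
  have hq := pow_pos (qq_pos (d := d)) k
  have hd2 : (d : ℝ) + 2 ≠ 0 := by positivity
  have h1 : 1 / Real.sqrt B.card ≤ (k : ℝ) ^ 2 * qq d ^ k := by
    refine le_trans ?_ (le_mul_of_one_le_left hq.le hk')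
    rw [qq_pow, Real.rpow_neg (by norm_num), one_div]
    apply inv_anti₀ (by positivity)
    apply Real.le_sqrt_of_sq_le
    rw [hBcard]
    push_cast
    refine le_trans (le_of_eq ?_) (pow_le_pow_left₀ (by linarith) hbs d)
    rw [hb, ← Real.rpow_natCast, ← Real.rpow_natCast, ← Real.rpow_mul (by norm_num),
      ← Real.rpow_mul (by norm_num)]
    congr 1
    unfold bet
    push_cast
    field_simp
  have h2 : (s : ℝ) * ((k : ℝ) ^ 2 / 2 ^ k) ≤ 2 * ((k : ℝ) ^ 2 * qq d ^ k) := by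
    have h3 : b / 2 ^ k = qq d ^ k := by
      rw [qq_pow, hb, ← Real.rpow_natCast, ← Real.rpow_sub (by norm_num)]
      congr 1
      unfold bet
      field_simp
      ring
    calc (s : ℝ) * ((k : ℝ) ^ 2 / 2 ^ k) ≤ 2 * b * ((k : ℝ) ^ 2 / 2 ^ k) := by gcongr
      _ = 2 * ((k : ℝ) ^ 2 * (b / 2 ^ k)) := by ring
      _ = _ := by rw [h3]
  calc _ ≤ ENNReal.ofReal ((k : ℝ) ^ 2 * qq d ^ k) +
        2 * ENNReal.ofReal (KK d * SS * s * ((k : ℝ) ^ 2 / 2 ^ k)) := by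
        gcongr
    _ = ENNReal.ofReal ((k : ℝ) ^ 2 * qq d ^ k +
        2 * (KK d * SS * s * ((k : ℝ) ^ 2 / 2 ^ k))) := by
        rw [ENNReal.ofReal_add (by positivity) (by positivity),
          ENNReal.ofReal_mul (p := 2) (by norm_num)]
        simp
    _ ≤ _ := by
        apply ENNReal.ofReal_le_ofReal
        have := mul_le_mul_of_nonneg_left h2 hKS
        unfold CC
        nlinarith [this]

lemma unmatched_null (hd : 1 ≤ d) {P : Measure (Config d)} (hP : IsBernoulliHalfProduct P)
    (x : Site d) : P {γ | ∀ k, phi relQ γ k x = x} = 0 := by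
  have h0 : P {γ | ∀ k, phi relQ γ k (0 : Site d) = 0} = 0 := by
    have hlim : Filter.Tendsto (fun k : ℕ => ENNReal.ofReal (CC d * ((k : ℝ) ^ 2 * qq d ^ k)))
        Filter.atTop (nhds 0) := by
      rw [← ENNReal.ofReal_zero]
      apply ENNReal.tendsto_ofReal
      have := tendsto_pow_const_mul_const_pow_of_abs_lt_one 2
        (r := qq d) (by rw [abs_of_pos qq_pos]; exact qq_lt_one hd)
      simpa using this.const_mul (CC d)
    refine le_antisymm (ge_of_tendsto hlim ?_) bot_le
    filter_upwards [Filter.eventually_ge_atTop 1] with k hk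
    refine le_trans (measure_mono ?_) (level_bound hd hP hk)
    intro γ hγ
    exact hγ (k + 1)
  have hm : MeasurableSet {γ : Config d | ∀ k, phi relQ γ k x = x} := by
    have : {γ : Config d | ∀ k, phi relQ γ k x = x} = ⋂ k, {γ | phi relQ γ k x = x} := by
      ext γ; simp
    rw [this]
    exact MeasurableSet.iInter fun k => phi_meas relQ_good k x x
  rw [← (shift_mp hP x).measure_preimage hm.nullMeasurableSet]
  rw [← h0]
  congr 1
  ext γ
  simp only [Set.mem_preimage, Set.mem_ofPred_eq]
  refine forall_congr' fun k => ?_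
  have := phi_shift relQ_good γ k 0 x
  rw [zero_add] at this
  rw [this]
  simp

lemma tail_level (hd : 1 ≤ d) {P : Measure (Config d)} (hP : IsBernoulliHalfProduct P)
    {n : ℕ} (hn : 16 ≤ n) {r : ℝ} (hr : (2 : ℝ) ^ (n + 1) ≤ r) :
    P {γ | r < ZΦ (Phi relQ) γ} ≤ ENNReal.ofReal ((CC d + 1) * ((n : ℝ) ^ 2 * qq d ^ n)) := by
  have hsub : {γ : Config d | r < ZΦ (Phi relQ) γ} ⊆
      {γ | phi relQ γ (n + 1) 0 = 0} ∪ {γ | badj γ n} := by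
    intro γ hγ
    by_contra hc
    simp only [Set.mem_union, Set.mem_ofPred_eq, not_or] at hc hγ
    have h1 := relQ_ball hc.2 (Phi_rel relQ_good γ n 0 hc.1)
    refine absurd hγ (not_lt.2 (le_trans ?_ hr))
    unfold ZΦ
    rw [pi_norm_le_iff_of_nonneg (by positivity)]
    intro i
    rw [Int.norm_eq_abs]
    have := h1 i
    exact_mod_cast this
  have hq2 : (1 / 2 : ℝ) ≤ qq d := by
    unfold qq
    rw [one_div, ← Real.rpow_neg_one]
    exact Real.rpow_le_rpow_of_exponent_le (by norm_num) (by linarith [bet_le_one (d := d)])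
  have hn1 : (1 : ℝ) ≤ (n : ℝ) ^ 2 := one_le_pow₀ (by exact_mod_cast (by omega : 1 ≤ n))
  have hq := pow_pos (qq_pos (d := d)) n
  have hC := CC_pos (d := d)
  refine (measure_mono hsub).trans ((measure_union_le _ _).trans ?_)
  refine (add_le_add (level_bound hd hP (by omega)) (bad_prob hd hP hn)).trans ?_
  rw [← ENNReal.ofReal_add (by positivity) (by positivity)]
  apply ENNReal.ofReal_le_ofReal
  have h1 : (1 / 2 : ℝ) ^ n ≤ (n : ℝ) ^ 2 * qq d ^ n :=
    (pow_le_pow_left₀ (by norm_num) hq2 n).trans (le_mul_of_one_le_left hq.le hn1)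
  linarith

lemma tail_final (hd : 1 ≤ d) {P : Measure (Config d)} (hP : IsBernoulliHalfProduct P)
    {r : ℝ} (hr : 2 ≤ r) :
    P {γ | r < ZΦ (Phi relQ) γ} ≤ ENNReal.ofReal
      ((2 ^ 19 + 16 * (CC d + 1)) * r ^ (-bet d) * Real.log r ^ 2) := by
  have := hP.1
  have hC := CC_pos (d := d)
  have hb := bet_pos hd
  have hb1 := bet_le_one (d := d)
  have hr0 : 0 < r := by linarith
  have hrb : 0 < r ^ (-bet d) := Real.rpow_pos_of_pos hr0 _
  have hlog2 : (1 / 2 : ℝ) < Real.log 2 := by linarith [Real.log_two_gt_d9]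
  have hlogr : Real.log 2 ≤ Real.log r := Real.log_le_log (by norm_num) hr
  rcases lt_or_ge r (2 ^ 17) with h | h
  · refine prob_le_one.trans ?_
    rw [← ENNReal.ofReal_one]
    apply ENNReal.ofReal_le_ofReal
    have h1 : (1 / 2 ^ 17 : ℝ) ≤ r ^ (-bet d) := by
      calc (1 / 2 ^ 17 : ℝ) ≤ r⁻¹ := by
            rw [one_div]; exact inv_anti₀ hr0 h.le
        _ = r ^ (-1 : ℝ) := (Real.rpow_neg_one r).symm
        _ ≤ r ^ (-bet d) := Real.rpow_le_rpow_of_exponent_le (by linarith) (by linarith)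
    have h2 : (1 / 4 : ℝ) ≤ Real.log r ^ 2 := by nlinarith
    calc (1 : ℝ) = 2 ^ 19 * (1 / 2 ^ 17) * (1 / 4) := by norm_num
      _ ≤ (2 ^ 19 + 16 * (CC d + 1)) * r ^ (-bet d) * Real.log r ^ 2 := by
        gcongr
        linarith
  · obtain ⟨m, hm1, hm2⟩ := exists_nat_pow_near (show 1 ≤ r by linarith) (one_lt_two : (1 : ℝ) < 2)
    have hm17 : 17 ≤ m := by
      by_contra hc
      have : (2 : ℝ) ^ (m + 1) ≤ 2 ^ 17 := pow_le_pow_right₀ (by norm_num) (by omega)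
      linarith
    obtain ⟨n, rfl⟩ : ∃ n, m = n + 1 := ⟨m - 1, by omega⟩
    refine (tail_level hd hP (by omega) hm1).trans ?_
    apply ENNReal.ofReal_le_ofReal
    have hnlog : (n : ℝ) ≤ 2 * Real.log r := by
      have h1 : Real.log ((2 : ℝ) ^ (n + 1)) ≤ Real.log r := Real.log_le_log (by positivity) hm1
      rw [Real.log_pow] at h1
      push_cast at h1
      have : (0 : ℝ) ≤ n := by positivity
      nlinarith
    have hq : qq d ^ n ≤ 4 * r ^ (-bet d) := by
      have h1 : ((2 : ℝ) ^ (n + 1 + 1)) ^ (-bet d) ≤ r ^ (-bet d) :=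
        Real.rpow_le_rpow_of_nonpos hr0 hm2.le (by linarith)
      have h2 : ((2 : ℝ) ^ (n + 1 + 1)) ^ (-bet d) = qq d ^ n * (2 : ℝ) ^ (-(2 * bet d)) := by
        rw [qq_pow, ← Real.rpow_natCast, ← Real.rpow_mul (by norm_num),
          ← Real.rpow_add (by norm_num)]
        congr 1
        push_cast
        ring
      have h3 : (1 / 4 : ℝ) ≤ (2 : ℝ) ^ (-(2 * bet d)) := by
        calc (1 / 4 : ℝ) = (2 : ℝ) ^ (-2 : ℝ) := by
              rw [Real.rpow_neg (by norm_num)]; norm_num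
          _ ≤ _ := Real.rpow_le_rpow_of_exponent_le (by norm_num) (by linarith)
      have h4 := mul_le_mul_of_nonneg_left h3 (pow_pos (qq_pos (d := d)) n).le
      linarith
    have hq0 := pow_pos (qq_pos (d := d)) n
    have hlr : 0 ≤ Real.log r := by linarith
    calc (CC d + 1) * ((n : ℝ) ^ 2 * qq d ^ n)
        ≤ (CC d + 1) * ((2 * Real.log r) ^ 2 * (4 * r ^ (-bet d))) := by gcongr
      _ = (16 * (CC d + 1)) * r ^ (-bet d) * Real.log r ^ 2 := by ring
      _ ≤ _ := by
        gcongr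
        linarith

end Final

/-- Easy preliminary result: there exist `c₉ = c₉(d) < ∞` and a translation-equivariant
matching rule `Φ` with `ℙ(Z_Φ > r) ≤ c₉ r^{-d/(d+2)} (log r)²` for all `r ≥ 2`. -/
theorem statement16 (d : ℕ) (hd : 1 ≤ d)
    (P : Measure (Config d)) (hP : IsBernoulliHalfProduct P) :
    ∃ (c₉ : ℝ) (Φ : Config d → Site d → Site d),
      IsMatchingRule P Φ ∧ IsEquivariant P Φ ∧
        ∀ r : ℝ, 2 ≤ r →
          P {γ | r < ZΦ Φ γ} ≤
            ENNReal.ofReal (c₉ * r ^ (-((d : ℝ) / ((d : ℝ) + 2))) * Real.log r ^ 2) := by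
  refine ⟨2 ^ 19 + 16 * (CC d + 1), Phi relQ, ⟨Phi_meas relQ_good, ?_⟩, ?_, ?_⟩
  · have h : ∀ᵐ γ ∂P, ∀ x : Site d, ¬ ∀ k, phi relQ γ k x = x := by
      rw [ae_all_iff]
      intro x
      rw [ae_iff]
      simpa only [not_not] using unmatched_null hd hP x
    filter_upwards [h] with γ hγ
    apply Phi_matching relQ_good
    intro x
    have := hγ x
    push Not at this
    exact this
  · intro z x
    exact Filter.Eventually.of_forall fun γ => Phi_shift relQ_good γ x z
  · intro r hr
    exact tail_final hd hP hr

end
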